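/- Let ℋ be an infinite-dimensional complex Hilbert space, let A ∈ B(ℋ), and let k be a positive integer. Then the relative interior of Ω_k(A) is contained in Λ_k(A), Λ_k(A) is contained in Ω_k(A), and Ω_k(A) equals the closure of Λ_k(A). In particular Λ_k(A) is nonempty and Ω_k(A) is its closure. -/

import Mathlib

noncomputable section

open scoped InnerProductSpace
open Complex

variable {H : Type*} [NormedAddCommGroup H] [InnerProductSpace ℂ H] [CompleteSpace H]

/-- `P` is an orthogonal projection: self-adjoint and idempotent. -/
def IsOrthProj (P : H →L[ℂ] H) : Prop :=
  IsSelfAdjoint P ∧ P ∘L P = P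

/-- The rank of a bounded operator, as a cardinal. -/
def opRank (F : H →L[ℂ] H) : Cardinal :=
  Module.rank ℂ (LinearMap.range (F : H →ₗ[ℂ] H))

/-- The rank-`k` numerical range `Λ_k(A)`. -/
def rankKRange (k : ℕ) (A : H →L[ℂ] H) : Set ℂ :=
  { lam | ∃ P : H →L[ℂ] H, IsOrthProj P ∧ opRank P = k ∧ P ∘L A ∘L P = lam • P }

/-- The classical numerical range `W(A)`. -/
def numRange (A : H →L[ℂ] H) : Set ℂ :=
  { z | ∃ x : H, ‖x‖ = 1 ∧ ⟪x, A x⟫_ℂ = z }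

/-- `λ_k(T)`: the supremum over `k`-dimensional compressions of the `k`-th largest
eigenvalue of the compression (Courant–Fischer form: sup over `k`-dimensional
subspaces of the infimum of the Rayleigh quotient). -/
def lambdaSA (k : ℕ) (T : H →L[ℂ] H) : ℝ :=
  sSup { t : ℝ | ∃ V : Submodule ℂ H, Module.finrank ℂ V = k ∧
    ∀ x ∈ V, ‖x‖ = 1 → t ≤ (⟪x, T x⟫_ℂ).re }

/-- The real part `(T + T*)/2` of an operator. -/
def reOp (T : H →L[ℂ] H) : H →L[ℂ] H :=
  (2 : ℂ)⁻¹ • (T + ContinuousLinearMap.adjoint T)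

/-- The set `Ω_k(A)`. -/
def omegaK (k : ℕ) (A : H →L[ℂ] H) : Set ℂ :=
  { μ | ∀ ξ ∈ Set.Ico (0 : ℝ) (2 * Real.pi),
      (Complex.exp (ξ * Complex.I) * μ).re ≤ lambdaSA k (reOp (Complex.exp (ξ * Complex.I) • A)) }


set_option linter.unusedSimpArgs false
set_option linter.unusedSectionVars false

theorem fp_one_strict (m : ℕ) (b : Fin (m+1) → ℝ) (c : Fin m → ℝ)
    (h1 : ∀ i : Fin m, b i.castSucc < c i) (h2 : ∀ i : Fin m, c i < b i.succ) :
    ∃ T : Fin (m+1) → Fin m → ℝ,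
      (∀ i i', ∑ j, T j i * T j i' = if i = i' then 1 else 0) ∧
      (∀ i i', ∑ j, b j * (T j i * T j i') = if i = i' then c i else 0) := by
  classical
  have hb : StrictMono b := by
    rw [Fin.strictMono_iff_lt_succ]
    intro i
    exact (h1 i).trans (h2 i)
  have hc : StrictMono c := by
    intro i i' hii
    refine (h2 i).trans_le ((hb.monotone ?_).trans (h1 i').le)
    exact Fin.succ_le_castSucc_iff.2 hii
  have hbc : ∀ j i, b j - c i ≠ 0 := by
    intro j i h
    rcases le_or_gt j i.castSucc with hj | hj
    · have := hb.monotone hj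
      linarith [h1 i]
    · have := hb.monotone (Fin.castSucc_lt_iff_succ_le.1 hj)
      linarith [h2 i]
  set w : Fin (m+1) → ℝ := fun j => (∏ i, (b j - c i)) / ∏ i ∈ Finset.univ.erase j, (b j - b i) with hw
  have hwpos : ∀ j, 0 < w j := by
    intro j
    have : ∏ i ∈ Finset.univ.erase j, (b j - b i) = ∏ i : Fin m, (b j - b (j.succAbove i)) := by
      have h3 : (Finset.univ.erase j : Finset (Fin (m+1))) = Finset.univ.map j.succAboveEmb := by
        ext x
        simp [Fin.exists_succAbove_eq_iff]
      rw [h3, Finset.prod_map]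
      rfl
    rw [hw]
    simp only
    rw [this, ← Finset.prod_div_distrib]
    refine Finset.prod_pos fun i _ => ?_
    rcases lt_or_ge i.castSucc j with hj | hj
    · rw [Fin.succAbove_of_castSucc_lt _ _ hj]
      have := hb.monotone (Fin.castSucc_lt_iff_succ_le.1 hj)
      exact div_pos (by linarith [h2 i]) (by linarith [hb hj])
    · rw [Fin.succAbove_of_le_castSucc _ _ hj]
      have := hb.monotone hj
      exact div_pos_of_neg_of_neg (by linarith [h1 i]) (by linarith [h1 i, h2 i])
  have key : ∀ i, ∑ j, w j / (b j - c i) = 0 := by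
    intro i
    set P : Polynomial ℝ := ∏ r ∈ Finset.univ.erase i, (Polynomial.X - Polynomial.C (c r)) with hP
    have hm : 0 < m := i.pos
    have hdeg : P.natDegree = m - 1 := by
      rw [hP, Polynomial.natDegree_prod_of_monic _ _ (fun r _ => Polynomial.monic_X_sub_C _)]
      simp
    have hd1 : P.degree < (Finset.univ : Finset (Fin (m+1))).card := by
      refine lt_of_le_of_lt Polynomial.degree_le_natDegree ?_
      rw [hdeg]
      simp only [Finset.card_univ, Fintype.card_fin]
      exact_mod_cast (by omega)
    have := Lagrange.coeff_eq_sum (s := Finset.univ) (v := b) hb.injective.injOn hd1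
    rw [Polynomial.coeff_eq_zero_of_natDegree_lt] at this
    · rw [this]
      refine Finset.sum_congr rfl fun j _ => ?_
      rw [hw]
      simp only
      have h5 : ∏ i, (b j - c i) = (b j - c i) * P.eval (b j) := by
        rw [hP, Polynomial.eval_prod, ← Finset.mul_prod_erase _ _ (Finset.mem_univ i)]
        simp
      rw [h5, div_right_comm, mul_div_cancel_left₀ _ (hbc j i)]
    · rw [hdeg]; simp; omega
  set n : Fin m → ℝ := fun i => ∑ j, w j / (b j - c i)^2 with hn
  have hnpos : ∀ i, 0 < n i := by
    intro i
    refine Finset.sum_pos (fun j _ => div_pos (hwpos j) ?_) ⟨0, Finset.mem_univ _⟩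
    have := hbc j i
    positivity
  set T : Fin (m+1) → Fin m → ℝ := fun j i => √(w j) / (b j - c i) / √(n i) with hT
  have hTT : ∀ j i i', T j i * T j i' = w j / ((b j - c i) * (b j - c i')) * (1 / (√(n i) * √(n i'))) := by
    intro j i i'
    have h1 : √(w j) * √(w j) = w j := Real.mul_self_sqrt (hwpos j).le
    have h2 := hbc j i
    have h3 := hbc j i'
    have h4 := (Real.sqrt_pos.2 (hnpos i)).ne'
    have h5 := (Real.sqrt_pos.2 (hnpos i')).ne'
    rw [hT]
    simp only
    field_simp
    linear_combination h1
  have hB : ∀ i i', ∑ j, b j * (T j i * T j i') = c i * ∑ j, T j i * T j i' := by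
    intro i i'
    rw [← sub_eq_zero, Finset.mul_sum, ← Finset.sum_sub_distrib]
    have : ∀ j, b j * (T j i * T j i') - c i * (T j i * T j i') = (w j / (b j - c i')) * (1 / (√(n i) * √(n i'))) := by
      intro j
      rw [hTT]
      have h2 := hbc j i
      have h3 := hbc j i'
      field_simp
    rw [Finset.sum_congr rfl fun j _ => this j, ← Finset.sum_mul, key, zero_mul]
  have hO : ∀ i i', ∑ j, T j i * T j i' = if i = i' then 1 else 0 := by
    intro i i'
    split_ifs with hne
    · subst hne
      have : ∀ j, T j i * T j i = w j / (b j - c i)^2 * (1 / n i) := by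
        intro j
        rw [hTT, Real.mul_self_sqrt (hnpos i).le, sq]
      rw [Finset.sum_congr rfl fun j _ => this j, ← Finset.sum_mul]
      exact mul_one_div_cancel (hnpos i).ne'
    · have e1 := hB i i'
      have e2 := hB i' i
      simp only [mul_comm (T _ i') (T _ i)] at e2
      have : (c i - c i') * ∑ j, T j i * T j i' = 0 := by linarith
      rcases mul_eq_zero.1 this with h | h
      · exact absurd (hc.injective (by linarith)) hne
      · exact h
  refine ⟨T, hO, fun i i' => ?_⟩
  rw [hB, hO]
  simp

theorem fp_one (m : ℕ) (b : Fin (m+1) → ℝ) (c : Fin m → ℝ)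
    (h1 : ∀ i : Fin m, b i.castSucc ≤ c i) (h2 : ∀ i : Fin m, c i ≤ b i.succ) :
    ∃ T : Fin (m+1) → Fin m → ℝ,
      (∀ i i', ∑ j, T j i * T j i' = if i = i' then 1 else 0) ∧
      (∀ i i', ∑ j, b j * (T j i * T j i') = if i = i' then c i else 0) := by
  let d : ℕ → ℝ := fun n => 1 / ((n:ℝ) + 1)
  have hd : ∀ n, 0 < d n := fun n => Nat.one_div_pos_of_nat
  have hd0 : Filter.Tendsto d Filter.atTop (nhds 0) := tendsto_one_div_add_atTop_nhds_zero_nat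
  have hex : ∀ n : ℕ, ∃ T : Fin (m+1) → Fin m → ℝ,
      (∀ i i', ∑ j, T j i * T j i' = if i = i' then 1 else 0) ∧
      (∀ i i', ∑ j, (b j + (2 * (j:ℕ) : ℝ) * d n) * (T j i * T j i') =
        if i = i' then c i + (2 * (i:ℕ) + 1 : ℝ) * d n else 0) := by
    intro n
    refine fp_one_strict m (fun j => b j + (2 * (j:ℕ) : ℝ) * d n) (fun i => c i + (2 * (i:ℕ) + 1 : ℝ) * d n) ?_ ?_
    · intro i
      simp only [Fin.val_castSucc]
      nlinarith [h1 i, hd n]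
    · intro i
      simp only [Fin.val_succ, Nat.cast_add, Nat.cast_one]
      nlinarith [h2 i, hd n]
  choose T hT1 hT2 using hex
  have hK : IsCompact (Set.univ.pi fun _ : Fin (m+1) => Set.univ.pi fun _ : Fin m => Set.Icc (-1:ℝ) 1) :=
    isCompact_univ_pi fun _ => isCompact_univ_pi fun _ => isCompact_Icc
  have hmem : ∀ n, T n ∈ (Set.univ.pi fun _ : Fin (m+1) => Set.univ.pi fun _ : Fin m => Set.Icc (-1:ℝ) 1) := by
    intro n j _ i _
    have := hT1 n i i
    rw [if_pos rfl] at this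
    have h3 : T n j i * T n j i ≤ ∑ j, T n j i * T n j i :=
      Finset.single_le_sum (f := fun j => T n j i * T n j i) (fun j _ => mul_self_nonneg _) (Finset.mem_univ j)
    rw [this] at h3
    exact abs_le.1 (abs_le_one_iff_mul_self_le_one.2 h3)
  obtain ⟨T0, -, φ, hφ, hlim⟩ := hK.tendsto_subseq hmem
  have hl : ∀ j i, Filter.Tendsto (fun n => T (φ n) j i) Filter.atTop (nhds (T0 j i)) := by
    intro j i
    have h3 := (tendsto_pi_nhds.1 hlim) j
    exact (tendsto_pi_nhds.1 h3) i
  have hdφ : Filter.Tendsto (fun n => d (φ n)) Filter.atTop (nhds 0) := hd0.comp hφ.tendsto_atTop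
  refine ⟨T0, fun i i' => ?_, fun i i' => ?_⟩
  · have : Filter.Tendsto (fun n => ∑ j, T (φ n) j i * T (φ n) j i') Filter.atTop
        (nhds (∑ j, T0 j i * T0 j i')) :=
      tendsto_finsetSum _ fun j _ => (hl j i).mul (hl j i')
    simp only [hT1] at this
    exact tendsto_nhds_unique this tendsto_const_nhds
  · have h3 : Filter.Tendsto (fun n => ∑ j, (b j + (2 * (j:ℕ) : ℝ) * d (φ n)) * (T (φ n) j i * T (φ n) j i')) Filter.atTop
        (nhds (∑ j, (b j + (2 * (j:ℕ) : ℝ) * 0) * (T0 j i * T0 j i'))) :=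
      tendsto_finsetSum _ fun j _ => (tendsto_const_nhds.add (hdφ.const_mul _)).mul ((hl j i).mul (hl j i'))
    simp only [hT2, mul_zero, add_zero] at h3
    refine tendsto_nhds_unique h3 ?_
    split_ifs with h
    · simpa using (tendsto_const_nhds (x := c i)).add (hdφ.const_mul (2 * (i:ℕ) + 1 : ℝ))
    · exact tendsto_const_nhds

theorem fan_pall (k : ℕ) (d : ℕ) : ∀ (a c : ℕ → ℝ), Monotone a → Monotone c →
    (∀ i < k, a i ≤ c i) → (∀ i < k, c i ≤ a (i + d)) →
    ∃ T : Fin (k+d) → Fin k → ℝ,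
      (∀ i i', ∑ j, T j i * T j i' = if i = i' then 1 else 0) ∧
      (∀ i i', ∑ j : Fin (k+d), a j * (T j i * T j i') = if i = i' then c i else 0) := by
  induction d with
  | zero =>
    intro a c ha hc h1 h2
    refine ⟨fun j i => if j = i then 1 else 0, ?_, ?_⟩
    · intro i i'
      simp [eq_comm]
    · intro i i'
      by_cases h : i = i'
      · subst h
        simpa using le_antisymm (h1 i i.2) (h2 i i.2)
      · simp [h, Ne.symm h]
  | succ d ih =>
    intro a c ha hc h1 h2
    set a' : ℕ → ℝ := fun i => if i < d then a i else max (a i) (c (i - d)) with ha'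
    have hle : ∀ i, a i ≤ a' i := by
      intro i
      simp only [ha']
      split_ifs
      · exact le_rfl
      · exact le_max_left _ _
    have hmono : Monotone a' := by
      intro i j hij
      simp only [ha']
      split_ifs
      · exact ha hij
      · exact (ha hij).trans (le_max_left _ _)
      · omega
      · exact max_le_max (ha hij) (hc (by omega))
    have hup : ∀ i < k + d, a' i ≤ a (i+1) := by
      intro i hi
      simp only [ha']
      split_ifs
      · exact ha (by omega)
      · refine max_le (ha (by omega)) ((h2 _ (by omega)).trans (ha (by omega)))
    obtain ⟨T1, hT1, hT1'⟩ := fp_one (k+d) (fun j => a j) (fun j => a' j)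
      (fun i => hle i) (fun i => by simpa using hup i i.2)
    obtain ⟨T2, hT2, hT2'⟩ := ih a' c hmono hc (by
      intro i hi
      simp only [ha']
      split_ifs
      · exact h1 i hi
      · exact max_le (h1 i hi) (hc (by omega))) (by
      intro i hi
      simp only [ha']
      rw [if_neg (by omega)]
      simp)
    have expand : ∀ (i i' : Fin k) (f : Fin (k+d+1) → ℝ), ∑ j, f j * ((∑ l, T1 j l * T2 l i) * (∑ l, T1 j l * T2 l i'))
        = ∑ l, ∑ l', T2 l i * T2 l' i' * ∑ j, f j * (T1 j l * T1 j l') := by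
      intro i i' f
      simp only [Finset.sum_mul_sum]
      simp only [Finset.mul_sum]
      rw [Finset.sum_comm]
      refine Finset.sum_congr rfl fun l _ => ?_
      rw [Finset.sum_comm]
      refine Finset.sum_congr rfl fun l' _ => Finset.sum_congr rfl fun j _ => ?_
      ring
    refine ⟨fun j i => ∑ l, T1 j l * T2 l i, ?_, ?_⟩
    · intro i i'
      have := expand i i' (fun _ => 1)
      simp only [one_mul, hT1] at this
      rw [← hT2 i i']
      refine this.trans ?_
      simp
    · intro i i'
      have := expand i i' (fun j => a j)
      simp only [hT1'] at this
      rw [← hT2' i i']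
      refine this.trans ?_
      simp only [mul_ite, mul_zero, Finset.sum_ite_eq, Finset.mem_univ, if_true]
      refine Finset.sum_congr rfl fun l _ => ?_
      ring

theorem sort_enum {ι : Type*} (S : Finset ι) (t : ι → ℝ) (k : ℕ) (h0 : 0 < k) (h : k ≤ S.card) :
    ∃ (d : ℕ) (a : ℕ → ℝ) (e : Fin (k+d) ≃ S), Monotone a ∧ ∀ i : Fin (k+d), a i = t (e i) := by
  obtain ⟨d, hd⟩ := Nat.exists_eq_add_of_le h
  let e0 : Fin (k+d) ≃ S := (finCongr hd.symm).trans S.equivFin.symm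
  let f : Fin (k+d) → ℝ := fun i => t (e0 i)
  have hm := Tuple.monotone_sort f
  refine ⟨d, fun n => f (Tuple.sort f ⟨min n (k+d-1), by omega⟩), (Tuple.sort f).trans e0, ?_, ?_⟩
  · intro m n hmn
    apply hm
    simp only [Fin.mk_le_mk]
    omega
  · intro i
    have : (⟨min i (k+d-1), by omega⟩ : Fin (k+d)) = i := by
      ext; simp; omega
    simp only [this]
    rfl

theorem enum_card_lt {ι : Type*} (S : Finset ι) (t : ι → ℝ) (n : ℕ) (a : ℕ → ℝ) (e : Fin n ≃ S)
    (ha : Monotone a) (he : ∀ i : Fin n, a i = t (e i)) (i : ℕ) (s : ℝ) (hs : s ≤ a i) :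
    (S.filter (fun j => t j < s)).card ≤ i := by
  classical
  have : (S.filter (fun j => t j < s)) ⊆ ((Finset.univ.filter (fun l : Fin n => (l:ℕ) < i)).image (fun l => (e l : ι))) := by
    intro j hj
    rw [Finset.mem_filter] at hj
    rw [Finset.mem_image]
    refine ⟨e.symm ⟨j, hj.1⟩, ?_, by simp⟩
    simp only [Finset.mem_filter, Finset.mem_univ, true_and]
    by_contra hcon
    have h1 := ha (not_lt.1 hcon)
    rw [he] at h1
    simp at h1
    linarith [hj.2]
  refine (Finset.card_le_card this).trans (Finset.card_image_le.trans ?_)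
  have h2 : (Finset.univ.filter (fun l : Fin n => (l:ℕ) < i)).map Fin.valEmbedding ⊆ Finset.range i := by
    intro x hx
    simp at hx
    obtain ⟨y, hy, rfl⟩ := hx
    simpa using hy
  simpa using Finset.card_le_card h2

theorem enum_card_gt {ι : Type*} (S : Finset ι) (t : ι → ℝ) (n : ℕ) (a : ℕ → ℝ) (e : Fin n ≃ S)
    (ha : Monotone a) (he : ∀ i : Fin n, a i = t (e i)) (i : ℕ) (s : ℝ) (hs : a i ≤ s) :
    (S.filter (fun j => s < t j)).card ≤ n - 1 - i := by
  classical
  have : (S.filter (fun j => s < t j)) ⊆ ((Finset.univ.filter (fun l : Fin n => i < (l:ℕ))).image (fun l => (e l : ι))) := by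
    intro j hj
    rw [Finset.mem_filter] at hj
    rw [Finset.mem_image]
    refine ⟨e.symm ⟨j, hj.1⟩, ?_, by simp⟩
    simp only [Finset.mem_filter, Finset.mem_univ, true_and]
    by_contra hcon
    have h1 := ha (not_lt.1 hcon)
    rw [he] at h1
    simp at h1
    linarith [hj.2]
  refine (Finset.card_le_card this).trans (Finset.card_image_le.trans ?_)
  have h2 : (Finset.univ.filter (fun l : Fin n => i < (l:ℕ))).map Fin.valEmbedding ⊆ Finset.Ioo i n := by
    intro x hx
    simp at hx
    obtain ⟨y, hy, rfl⟩ := hx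
    simpa using hy
  have := Finset.card_le_card h2
  simp at this
  omega

theorem enum_cross {ι : Type*} (S1 S2 : Finset ι) (t : ι → ℝ) (k d1 d2 : ℕ) (a b : ℕ → ℝ)
    (e1 : Fin (k+d1) ≃ S1) (e2 : Fin (k+d2) ≃ S2)
    (ha : Monotone a) (he1 : ∀ i : Fin (k+d1), a i = t (e1 i))
    (hb : Monotone b) (he2 : ∀ i : Fin (k+d2), b i = t (e2 i))
    (hs : ∀ s : ℝ, s ≠ 0 → k ≤ (S1.filter (fun j => t j < s)).card + (S2.filter (fun j => s < t j)).card) :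
    ∀ i < k, a i ≤ b (i + d2) := by
  intro i hi
  by_contra hcon
  rw [not_le] at hcon
  obtain ⟨s, hs0, hs1, hs2⟩ : ∃ s : ℝ, s ≠ 0 ∧ b (i+d2) ≤ s ∧ s ≤ a i := by
    by_cases h : a i = 0
    · exact ⟨b (i+d2), by linarith, le_rfl, hcon.le⟩
    · exact ⟨a i, h, hcon.le, le_rfl⟩
  have h1 := enum_card_lt S1 t _ a e1 ha he1 i s hs2
  have h2 := enum_card_gt S2 t _ b e2 hb he2 (i+d2) s hs1
  have h3 := hs s hs0
  omega

theorem enum_embed {ι : Type*} [Fintype ι] (S : Finset ι) (r t : ι → ℝ) (hr : ∀ j, r j ≠ 0)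
    (k n : ℕ) (a c : ℕ → ℝ) (e : Fin n ≃ S) (he : ∀ i : Fin n, a i = t (e i))
    (T : Fin n → Fin k → ℝ) (h1 : ∀ i i', ∑ j, T j i * T j i' = if i = i' then 1 else 0)
    (h2 : ∀ i i', ∑ j : Fin n, a j * (T j i * T j i') = if i = i' then c i else 0) :
    ∃ y : Fin k → ι → ℝ, (∀ i, ∀ j ∉ S, y i j = 0) ∧
      (∀ i i', ∑ j, |r j| * (y i j * y i' j) = if i = i' then 1 else 0) ∧
      (∀ i i', ∑ j, |r j| * t j * (y i j * y i' j) = if i = i' then c i else 0) := by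
  classical
  set y : Fin k → ι → ℝ := fun i j => if h : j ∈ S then T (e.symm ⟨j, h⟩) i / √|r j| else 0 with hy
  have hsum : ∀ g : ι → ℝ, (∀ j ∉ S, g j = 0) → ∑ j, g j = ∑ l : Fin n, g (e l) := by
    intro g hg
    rw [Equiv.sum_comp e (fun x : S => g x), Finset.sum_coe_sort S g]
    exact (Finset.sum_subset (Finset.subset_univ S) (fun j _ hj => hg j hj)).symm
  have hz : ∀ i, ∀ j ∉ S, y i j = 0 := fun i j hj => by simp [hy, hj]
  have hye : ∀ i l, y i (e l) = T l i / √|r (e l)| := by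
    intro i l
    simp [hy]
  have hyy : ∀ i i' l, |r (e l)| * (y i (e l) * y i' (e l)) = T l i * T l i' := by
    intro i i' l
    rw [hye, hye]
    have hpos : 0 < |r (e l)| := abs_pos.2 (hr _)
    have h5 := Real.mul_self_sqrt hpos.le
    have h6 := (Real.sqrt_pos.2 hpos).ne'
    field_simp
    rw [sq, h5]
    ring
  refine ⟨y, hz, fun i i' => ?_, fun i i' => ?_⟩
  · rw [← h1, hsum _ (fun j hj => by rw [hz i j hj]; ring)]
    exact Finset.sum_congr rfl fun l _ => hyy i i' l
  · rw [← h2, hsum _ (fun j hj => by rw [hz i j hj]; ring)]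
    refine Finset.sum_congr rfl fun l _ => ?_
    rw [← hyy, he]
    ring

theorem diag_comb {ι : Type*} [Fintype ι] (r t : ι → ℝ) (hr : ∀ j, r j ≠ 0) (k : ℕ)
    (hp : k ≤ (Finset.univ.filter (fun j => 0 < r j)).card)
    (hm : k ≤ (Finset.univ.filter (fun j => r j < 0)).card)
    (hs : ∀ s : ℝ, s ≠ 0 → k ≤ (Finset.univ.filter (fun j => 0 < r j * (t j - s))).card ∧
      k ≤ (Finset.univ.filter (fun j => r j * (t j - s) < 0)).card) :
    ∃ x : Fin k → ι → ℝ,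
      (∀ i i', ∑ j, r j * (x i j * x i' j) = 0) ∧
      (∀ i i', ∑ j, r j * t j * (x i j * x i' j) = 0) ∧
      (∀ i i', ∑ j, |r j| * (x i j * x i' j) = if i = i' then 2 else 0) := by
  classical
  rcases Nat.eq_zero_or_pos k with rfl | hk
  · exact ⟨fun i => i.elim0, fun i => i.elim0, fun i => i.elim0, fun i => i.elim0⟩
  set S1 := (Finset.univ.filter (fun j => 0 < r j)) with hS1
  set S2 := (Finset.univ.filter (fun j => r j < 0)) with hS2
  obtain ⟨d1, a, e1, ha, he1⟩ := sort_enum _ t k hk hp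
  obtain ⟨d2, b, e2, hb, he2⟩ := sort_enum _ t k hk hm
  have hab : ∀ i < k, a i ≤ b (i + d2) := by
    refine enum_cross S1 S2 t k d1 d2 a b e1 e2 ha he1 hb he2 fun s hs0 => (hs s hs0).2.trans ?_
    rw [← Finset.card_union_of_disjoint]
    · refine Finset.card_le_card fun j hj => ?_
      simp only [hS1, hS2, Finset.mem_union, Finset.mem_filter, Finset.mem_univ, true_and] at hj ⊢
      rcases mul_neg_iff.1 hj with h | h
      · left; exact ⟨h.1, by linarith [h.2]⟩
      · right; exact ⟨h.1, by linarith [h.2]⟩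
    · rw [Finset.disjoint_left]
      intro j h1 h2
      simp only [hS1, hS2, Finset.mem_filter, Finset.mem_univ, true_and] at h1 h2
      linarith [h1.1, h2.1]
  have hba : ∀ i < k, b i ≤ a (i + d1) := by
    refine enum_cross S2 S1 t k d2 d1 b a e2 e1 hb he2 ha he1 fun s hs0 => (hs s hs0).1.trans ?_
    rw [← Finset.card_union_of_disjoint]
    · refine Finset.card_le_card fun j hj => ?_
      simp only [hS1, hS2, Finset.mem_union, Finset.mem_filter, Finset.mem_univ, true_and] at hj ⊢
      rcases mul_pos_iff.1 hj with h | h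
      · right; exact ⟨h.1, by linarith [h.2]⟩
      · left; exact ⟨h.1, by linarith [h.2]⟩
    · rw [Finset.disjoint_left]
      intro j h1 h2
      simp only [hS1, hS2, Finset.mem_filter, Finset.mem_univ, true_and] at h1 h2
      linarith [h1.1, h2.1]
  have hc : Monotone (fun i => max (a i) (b i)) := fun i j hij => max_le_max (ha hij) (hb hij)
  obtain ⟨T1, hT1, hT1'⟩ := fan_pall k d1 a _ ha hc (fun i _ => le_max_left _ _)
    (fun i hi => max_le (ha (by omega)) (hba i hi))
  obtain ⟨T2, hT2, hT2'⟩ := fan_pall k d2 b _ hb hc (fun i _ => le_max_right _ _)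
    (fun i hi => max_le (hab i hi) (hb (by omega)))
  obtain ⟨y, hy0, hy1, hy2⟩ := enum_embed S1 r t hr k _ a (fun i => max (a i) (b i)) e1 he1 T1 hT1 hT1'
  obtain ⟨z, hz0, hz1, hz2⟩ := enum_embed S2 r t hr k _ b (fun i => max (a i) (b i)) e2 he2 T2 hT2 hT2'
  have hcase : ∀ j i i', (y i j + z i j) * (y i' j + z i' j) = y i j * y i' j + z i j * z i' j ∧
      r j * ((y i j + z i j) * (y i' j + z i' j)) = |r j| * (y i j * y i' j) - |r j| * (z i j * z i' j) := by
    intro j i i'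
    rcases lt_or_gt_of_ne (hr j) with h | h
    · have hn : j ∉ S1 := by simp [hS1]; linarith
      rw [hy0 i j hn, hy0 i' j hn, abs_of_neg h]
      constructor <;> ring
    · have hn : j ∉ S2 := by simp [hS2]; linarith
      rw [hz0 i j hn, hz0 i' j hn, abs_of_pos h]
      constructor <;> ring
  refine ⟨fun i j => y i j + z i j, fun i i' => ?_, fun i i' => ?_, fun i i' => ?_⟩
  · rw [Finset.sum_congr rfl fun j _ => (hcase j i i').2, Finset.sum_sub_distrib, hy1, hz1, sub_self]
  · have : ∀ j, r j * t j * ((y i j + z i j) * (y i' j + z i' j)) =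
        |r j| * t j * (y i j * y i' j) - |r j| * t j * (z i j * z i' j) := by
      intro j
      linear_combination t j * (hcase j i i').2
    rw [Finset.sum_congr rfl fun j _ => this j, Finset.sum_sub_distrib, hy2, hz2, sub_self]
  · have : ∀ j, |r j| * ((y i j + z i j) * (y i' j + z i' j)) =
        |r j| * (y i j * y i' j) + |r j| * (z i j * z i' j) := by
      intro j
      rw [(hcase j i i').1]; ring
    rw [Finset.sum_congr rfl fun j _ => this j, Finset.sum_add_distrib, hy1, hz1]
    split_ifs <;> norm_num

def PD (T : H →L[ℂ] H) (F : Submodule ℂ H) : Prop :=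
  ∀ x ∈ F, x ≠ 0 → 0 < (⟪x, T x⟫_ℂ).re

def Iso (B : H →L[ℂ] H) (W : Submodule ℂ H) : Prop :=
  ∀ x ∈ W, ∀ y ∈ W, ⟪x, B y⟫_ℂ = 0

def Hyp (k : ℕ) (B : H →L[ℂ] H) (M : Submodule ℂ H) : Prop :=
  ∀ v : ℂ, v.im ≠ 0 → ∃ F ≤ M, Module.finrank ℂ F = k ∧ PD (v • B) F

theorem exists_sub_finrank {E : Type*} [AddCommGroup E] [Module ℂ E] (F : Submodule ℂ E)
    [FiniteDimensional ℂ F] (k : ℕ) (hk : k ≤ Module.finrank ℂ F) :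
    ∃ F' ≤ F, Module.finrank ℂ F' = k := by
  let b := Module.finBasis ℂ F
  let f : Fin k → E := fun i => (b (Fin.castLE hk i) : E)
  have hf : LinearIndependent ℂ f := by
    have h1 : LinearIndependent ℂ (fun i : Fin k => b (Fin.castLE hk i)) :=
      b.linearIndependent.comp _ (Fin.castLE_injective hk)
    exact h1.map' F.subtype F.ker_subtype
  refine ⟨Submodule.span ℂ (Set.range f), ?_, ?_⟩
  · rw [Submodule.span_le]
    rintro _ ⟨i, rfl⟩
    exact (b (Fin.castLE hk i)).2
  · rw [finrank_span_eq_card hf]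
    simp

theorem finrank_le_inf_ker {E W : Type*} [AddCommGroup E] [Module ℂ E] [AddCommGroup W] [Module ℂ W]
    [FiniteDimensional ℂ W] (F : Submodule ℂ E) [FiniteDimensional ℂ F] (ψ : E →ₗ[ℂ] W) :
    Module.finrank ℂ F ≤ Module.finrank ℂ (F ⊓ LinearMap.ker ψ : Submodule ℂ E) + Module.finrank ℂ W := by
  have h1 := LinearMap.finrank_range_add_finrank_ker (ψ.domRestrict F)
  have h2 := Submodule.finrank_le (LinearMap.range (ψ.domRestrict F))
  have h3 : Module.finrank ℂ (LinearMap.ker (ψ.domRestrict F)) =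
      Module.finrank ℂ (F ⊓ LinearMap.ker ψ : Submodule ℂ E) := by
    have : (LinearMap.ker (ψ.domRestrict F)).map F.subtype = F ⊓ LinearMap.ker ψ := by
      ext x
      simp only [Submodule.mem_map, LinearMap.mem_ker, Submodule.mem_inf, Submodule.subtype_apply,
        LinearMap.domRestrict_apply]
      constructor
      · rintro ⟨y, hy, rfl⟩
        exact ⟨y.2, hy⟩
      · rintro ⟨h, h'⟩
        exact ⟨⟨x, h⟩, h', rfl⟩
    rw [← this]
    exact (LinearEquiv.finrank_eq (Submodule.equivMapOfInjective F.subtype F.injective_subtype _))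
  omega

theorem pencil {V : Type*} [NormedAddCommGroup V] [InnerProductSpace ℂ V] [FiniteDimensional ℂ V]
    [Nontrivial V] (T : V →ₗ[ℂ] V) :
    ∃ x : V, x ≠ 0 ∧ ∃ w : V, ∀ y, ⟪w, y⟫_ℂ = 0 → ⟪y, T x⟫_ℂ = 0 ∧ ⟪x, T y⟫_ℂ = 0 := by
  by_cases h : Function.Injective T
  · let e := LinearEquiv.ofInjectiveEndo T h
    obtain ⟨c, hc⟩ := Module.End.exists_eigenvalue (e.symm.toLinearMap ∘ₗ LinearMap.adjoint T)
    obtain ⟨x, hx⟩ := hc.exists_hasEigenvector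
    refine ⟨x, hx.2, T x, fun y hy => ?_⟩
    have h1 : LinearMap.adjoint T x = c • T x := by
      have := hx.apply_eq_smul
      have h2 := congrArg e this
      simpa [e] using h2
    refine ⟨inner_eq_zero_symm.1 hy, ?_⟩
    rw [← LinearMap.adjoint_inner_left, h1, inner_smul_left, hy, mul_zero]
  · obtain ⟨x, hx, hx0⟩ : ∃ x, T x = 0 ∧ x ≠ 0 := by
      rw [← LinearMap.ker_eq_bot, Submodule.eq_bot_iff] at h
      push Not at h
      simpa using h
    refine ⟨x, hx0, LinearMap.adjoint T x, fun y hy => ⟨by simp [hx], ?_⟩⟩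
    rwa [← LinearMap.adjoint_inner_left]

theorem pencil' (B : H →L[ℂ] H) (M : Submodule ℂ H) [FiniteDimensional ℂ M] (hM : M ≠ ⊥) :
    ∃ x ∈ M, x ≠ 0 ∧ ∃ φ : H →ₗ[ℂ] ℂ, ∀ y ∈ M, φ y = 0 → ⟪y, B x⟫_ℂ = 0 ∧ ⟪x, B y⟫_ℂ = 0 := by
  have : Nontrivial M := (Submodule.nontrivial_iff_ne_bot).2 hM
  let T : M →ₗ[ℂ] M := (M.orthogonalProjection.toLinearMap ∘ₗ B.toLinearMap) ∘ₗ M.subtype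
  have hT : ∀ x y : M, ⟪x, T y⟫_ℂ = ⟪(x : H), B y⟫_ℂ := by
    intro x y
    simp [T]
  obtain ⟨x, hx, w, hw⟩ := pencil T
  refine ⟨x, x.2, by simpa using hx, (innerSL ℂ (w:H)).toLinearMap, fun y hy h => ?_⟩
  have := hw ⟨y, hy⟩ h
  rw [hT, hT] at this
  exact this

theorem sup_span_finrank {E : Type*} [AddCommGroup E] [Module ℂ E] (W : Submodule ℂ E)
    [FiniteDimensional ℂ W] (x : E) (hx : x ∉ W) :
    Module.finrank ℂ (W ⊔ Submodule.span ℂ {x} : Submodule ℂ E) = Module.finrank ℂ W + 1 := by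
  have hx0 : x ≠ 0 := fun h => hx (h ▸ W.zero_mem)
  have h1 := Submodule.finrank_sup_add_finrank_inf_eq W (Submodule.span ℂ {x})
  have h2 : W ⊓ Submodule.span ℂ {x} = ⊥ := by
    rw [← disjoint_iff, Submodule.disjoint_span_singleton' hx0]
    exact hx
  rw [h2, finrank_bot, finrank_span_singleton hx0] at h1
  simpa using h1

theorem finrank_map_inj {E E' : Type*} [AddCommGroup E] [Module ℂ E] [AddCommGroup E'] [Module ℂ E']
    (F : Submodule ℂ E) (f : E →ₗ[ℂ] E') (hf : ∀ x ∈ F, f x = 0 → x = 0) :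
    Module.finrank ℂ (F.map f) = Module.finrank ℂ F := by
  have h : LinearMap.range (f.domRestrict F) = F.map f := LinearMap.range_domRestrict F f
  rw [← h]
  apply LinearMap.finrank_range_of_inj
  rw [← LinearMap.ker_eq_bot, Submodule.eq_bot_iff]
  intro x hx
  have := hf x x.2 hx
  exact Subtype.ext this

theorem iso_step (B : H →L[ℂ] H) (M : Submodule ℂ H) [FiniteDimensional ℂ M] (k : ℕ)
    (hH : Hyp (k+1) B M) (x : H) (hxM : x ∈ M) (hx : x ≠ 0) (hxx : ⟪x, B x⟫_ℂ = 0)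
    (φ : H →ₗ[ℂ] ℂ) (hφ : ∀ y ∈ M, φ y = 0 → ⟪y, B x⟫_ℂ = 0 ∧ ⟪x, B y⟫_ℂ = 0) 
    (IH : ∀ N : Submodule ℂ H, N < M → Hyp k B N → ∃ W ≤ N, Module.finrank ℂ W = k ∧ Iso B W) :
    ∃ W ≤ M, Module.finrank ℂ W = k + 1 ∧ Iso B W := by
  let N : Submodule ℂ H := M ⊓ (LinearMap.ker ((innerSL ℂ x).toLinearMap ∘ₗ B.toLinearMap) ⊓
    (LinearMap.ker (innerSL ℂ (B x)).toLinearMap ⊓ LinearMap.ker (innerSL ℂ x).toLinearMap))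
  have hN : ∀ y, y ∈ N ↔ y ∈ M ∧ ⟪x, B y⟫_ℂ = 0 ∧ ⟪B x, y⟫_ℂ = 0 ∧ ⟪x, y⟫_ℂ = 0 := by
    intro y; simp [N]
  have hxN : x ∉ N := by
    intro h
    have := ((hN x).1 h).2.2.2
    exact hx (inner_self_eq_zero.1 this)
  have hNM : N < M := lt_of_le_of_ne inf_le_left (fun h => hxN (h ▸ hxM))
  have hxx' : ⟪x, x⟫_ℂ ≠ 0 := fun h => hx (inner_self_eq_zero.1 h)
  obtain ⟨W, hW, hWk, hWi⟩ := IH N hNM (by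
    intro v hv
    obtain ⟨F, hFM, hFk, hF⟩ := hH v hv
    have hFD : FiniteDimensional ℂ F := Submodule.finiteDimensional_of_le hFM
    have h1 := finrank_le_inf_ker F φ
    rw [hFk, Module.finrank_self] at h1
    have hFD' : FiniteDimensional ℂ (F ⊓ LinearMap.ker φ : Submodule ℂ H) :=
      Submodule.finiteDimensional_of_le inf_le_left
    obtain ⟨F', hF', hF'k⟩ := exists_sub_finrank (F ⊓ LinearMap.ker φ) k (by omega)
    let p : H →ₗ[ℂ] H := LinearMap.id - (LinearMap.toSpanSingleton ℂ H x) ∘ₗ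
      ((⟪x,x⟫_ℂ)⁻¹ • (innerSL ℂ x).toLinearMap)
    have hp : ∀ y, p y = y - ((⟪x,x⟫_ℂ)⁻¹ * ⟪x,y⟫_ℂ) • x := by
      intro y; simp [p]
    have hform : ∀ y ∈ F', ⟪p y, B (p y)⟫_ℂ = ⟪y, B y⟫_ℂ := by
      intro y hy
      obtain ⟨a, b⟩ := hφ y (hFM (hF' hy).1) (hF' hy).2
      rw [hp]
      simp [inner_sub_left, inner_sub_right, inner_smul_left, inner_smul_right, a, b, hxx]
    have hpk : ∀ y ∈ F', p y = 0 → y = 0 := by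
      intro y hy h
      by_contra hne
      have h2 := hF y (hF' hy).1 hne
      have h3 := hform y hy
      rw [h] at h3
      simp at h3
      simp [inner_smul_right, ← h3] at h2
    refine ⟨F'.map p, ?_, ?_, ?_⟩
    · rintro _ ⟨y, hy, rfl⟩
      obtain ⟨a, b⟩ := hφ y (hFM (hF' hy).1) (hF' hy).2
      rw [hN, hp]
      refine ⟨M.sub_mem (hFM (hF' hy).1) (M.smul_mem _ hxM), ?_, ?_, ?_⟩
      · simp [inner_sub_right, inner_smul_right, b, hxx]
      · simp [inner_sub_right, inner_smul_right, inner_eq_zero_symm.1 a, inner_eq_zero_symm.1 hxx]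
      · rw [inner_sub_right, inner_smul_right]
        field_simp
        simp
    · rw [finrank_map_inj F' p hpk, hF'k]
    · rintro _ ⟨y, hy, rfl⟩ hne
      have : y ≠ 0 := fun h => hne (by simp [h])
      have h2 := hF y (hF' hy).1 this
      simpa [inner_smul_right, hform y hy] using h2)
  have hFD : FiniteDimensional ℂ W := Submodule.finiteDimensional_of_le (hW.trans hNM.le)
  refine ⟨W ⊔ Submodule.span ℂ {x}, sup_le (hW.trans hNM.le) ?_, ?_, ?_⟩
  · rw [Submodule.span_le]; simpa using hxM
  · rw [sup_span_finrank W x (fun h => hxN (hW h)), hWk]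
  · intro y hy z hz
    obtain ⟨a, ha, b, hb, rfl⟩ := Submodule.mem_sup.1 hy
    obtain ⟨c, hc, d, hd, rfl⟩ := Submodule.mem_sup.1 hz
    obtain ⟨s, rfl⟩ := Submodule.mem_span_singleton.1 hb
    obtain ⟨t, rfl⟩ := Submodule.mem_span_singleton.1 hd
    obtain ⟨-, -, h1, -⟩ := (hN a).1 (hW ha)
    obtain ⟨-, h2, -, -⟩ := (hN c).1 (hW hc)
    simp [inner_add_left, inner_add_right, inner_smul_left, inner_smul_right, hxx, hWi a ha c hc, h2,
      inner_eq_zero_symm.1 h1]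

def NoIso (B : H →L[ℂ] H) (M : Submodule ℂ H) : Prop :=
  ∀ x ∈ M, x ≠ 0 → ∀ φ : H →ₗ[ℂ] ℂ, (∀ y ∈ M, φ y = 0 → ⟪y, B x⟫_ℂ = 0 ∧ ⟪x, B y⟫_ℂ = 0) →
    ⟪x, B x⟫_ℂ ≠ 0

theorem diagz (B : H →L[ℂ] H) (m : ℕ) : ∀ (M : Submodule ℂ H) [FiniteDimensional ℂ M],
    Module.finrank ℂ M = m → NoIso B M → 
    ∃ (n : ℕ) (e : Fin n → H), (∀ i, e i ∈ M) ∧ (∀ x ∈ M, ∃ c : Fin n → ℂ, x = ∑ i, c i • e i) ∧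
      (∀ i j, i ≠ j → ⟪e i, B (e j)⟫_ℂ = 0) ∧ (∀ i, ⟪e i, B (e i)⟫_ℂ ≠ 0) := by
  induction m using Nat.strong_induction_on with
  | _ m ih =>
  intro M _ hm hN
  by_cases hM : M = ⊥
  · subst hM
    exact ⟨0, Fin.elim0, fun i => i.elim0, fun x hx => ⟨Fin.elim0, by simpa using hx⟩,
      fun i => i.elim0, fun i => i.elim0⟩
  obtain ⟨x, hxM, hx0, φ, hφ⟩ := pencil' B M hM
  have hxx := hN x hxM hx0 φ hφ
  have hkey : ∀ y ∈ M, ⟪x, B y⟫_ℂ = 0 → ⟪y, B x⟫_ℂ = 0 := by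
    intro y hy hxy
    -- φ x ≠ 0
    have hφx : φ x ≠ 0 := fun h => hxx (hφ x hxM h).1
    have h1 : φ (y - (φ y / φ x) • x) = 0 := by
      simp [hφx]
    have h2 := (hφ _ (M.sub_mem hy (M.smul_mem _ hxM)) h1)
    have h3 := h2.2
    simp [inner_sub_right, inner_smul_right, hxy, hxx, hφx] at h3
    have h4 := h2.1
    simpa [h3] using h4
  let N : Submodule ℂ H := M ⊓ LinearMap.ker ((innerSL ℂ x).toLinearMap ∘ₗ B.toLinearMap)
  have hNm : ∀ y, y ∈ N ↔ y ∈ M ∧ ⟪x, B y⟫_ℂ = 0 := by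
    intro y; simp [N]
  have hNM : N < M := lt_of_le_of_ne inf_le_left (fun h => hxx ((hNm x).1 (h ▸ hxM)).2)
  have hFD : FiniteDimensional ℂ N := Submodule.finiteDimensional_of_le hNM.le
  obtain ⟨n, e, he, hs, ho, hd⟩ := ih (Module.finrank ℂ N) (hm ▸ Submodule.finrank_lt_finrank_of_lt hNM) N rfl (by
    intro y hy hy0 ψ hψ
    refine hN y (hNM.le hy) hy0 (ψ - (ψ x / ⟪x, B x⟫_ℂ) • ((innerSL ℂ x).toLinearMap ∘ₗ B.toLinearMap)) ?_
    intro z hz hz0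
    have h1 : z - (⟪x, B z⟫_ℂ / ⟪x, B x⟫_ℂ) • x ∈ N := by
      rw [hNm]
      refine ⟨M.sub_mem hz (M.smul_mem _ hxM), ?_⟩
      simp [inner_sub_right, inner_smul_right, hxx]
    have h2 := hψ _ h1 (by
      simp at hz0
      simp
      rw [← hz0]; ring)
    obtain ⟨h3, h4⟩ := (hNm y).1 hy
    have h5 := hkey y h3 h4
    simpa [inner_sub_left, inner_sub_right, inner_smul_left, inner_smul_right, h4, h5] using h2)
  refine ⟨n+1, Fin.cons x e, ?_, ?_, ?_, ?_⟩
  · intro i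
    refine Fin.cases hxM (fun i => hNM.le (he i)) i
  · intro y hy
    have h1 : y - (⟪x, B y⟫_ℂ / ⟪x, B x⟫_ℂ) • x ∈ N := by
      rw [hNm]
      refine ⟨M.sub_mem hy (M.smul_mem _ hxM), ?_⟩
      simp [inner_sub_right, inner_smul_right, hxx]
    obtain ⟨c, hc⟩ := hs _ h1
    refine ⟨Fin.cons (⟪x, B y⟫_ℂ / ⟪x, B x⟫_ℂ) c, ?_⟩
    simp [Fin.sum_univ_succ, ← hc]
  · intro i j
    refine Fin.cases ?_ (fun i => ?_) i <;> refine Fin.cases ?_ (fun j => ?_) j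
    · simp
    · intro _; exact ((hNm _).1 (he j)).2
    · intro _; exact hkey _ (hNM.le (he i)) ((hNm _).1 (he i)).2
    · intro h; exact ho i j (fun h' => h (by rw [h']))
  · intro i
    refine Fin.cases hxx (fun i => hd i) i

theorem diag_count (B : H →L[ℂ] H) (M : Submodule ℂ H) [FiniteDimensional ℂ M] (k n : ℕ) (e : Fin n → H)
    (hs : ∀ x ∈ M, ∃ c : Fin n → ℂ, x = ∑ i, c i • e i)
    (ho : ∀ i j, i ≠ j → ⟪e i, B (e j)⟫_ℂ = 0) (hd : ∀ i, ⟪e i, B (e i)⟫_ℂ ≠ 0)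
    (v : ℂ) (F : Submodule ℂ H) (hF : F ≤ M) (hk : Module.finrank ℂ F = k) (hP : PD (v • B) F) :
    k ≤ (Finset.univ.filter (fun j => 0 < (v * ⟪e j, B (e j)⟫_ℂ).re)).card := by
  have hFD : FiniteDimensional ℂ F := Submodule.finiteDimensional_of_le hF
  let J := {j : Fin n // 0 < (v * ⟪e j, B (e j)⟫_ℂ).re}
  let ψ : H →ₗ[ℂ] (J → ℂ) := LinearMap.pi (fun j => ((innerSL ℂ (e j.1)).toLinearMap ∘ₗ B.toLinearMap))
  have h1 := finrank_le_inf_ker F ψ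
  have h2 : F ⊓ LinearMap.ker ψ = ⊥ := by
    rw [Submodule.eq_bot_iff]
    rintro x ⟨hx, hx2⟩
    by_contra hne
    have h3 := hP x hx hne
    obtain ⟨c, hc⟩ := hs x (hF hx)
    have h4 : ∀ j, ⟪e j, B x⟫_ℂ = c j * ⟪e j, B (e j)⟫_ℂ := by
      intro j
      rw [hc, map_sum, inner_sum, Finset.sum_eq_single j]
      · simp [inner_smul_right]
      · intro i _ hij
        simp [inner_smul_right, ho j i (Ne.symm hij)]
      · simp
    have h5 : ⟪x, (v • B) x⟫_ℂ = ∑ j, (((‖c j‖^2 : ℝ)) : ℂ) * (v * ⟪e j, B (e j)⟫_ℂ) := by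
      have : ⟪x, B x⟫_ℂ = ∑ j, (starRingEnd ℂ (c j)) * (c j * ⟪e j, B (e j)⟫_ℂ) := by
        conv_lhs => rw [hc, sum_inner]
        rw [← hc]
        refine Finset.sum_congr rfl fun j _ => ?_
        rw [inner_smul_left, h4]
      rw [smul_apply, inner_smul_right, this, Finset.mul_sum]
      refine Finset.sum_congr rfl fun j _ => ?_
      have : (((‖c j‖^2 : ℝ)) : ℂ) = (starRingEnd ℂ (c j)) * c j := by
        rw [Complex.conj_mul']; simp
      rw [this]; ring
    rw [h5, Complex.re_sum] at h3
    refine absurd h3 (not_lt.2 (Finset.sum_nonpos fun j _ => ?_))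
    rw [Complex.re_ofReal_mul]
    by_cases hj : 0 < (v * ⟪e j, B (e j)⟫_ℂ).re
    · have h6 : ⟪e j, B x⟫_ℂ = 0 := congrFun hx2 ⟨j, hj⟩
      rw [h4] at h6
      have : c j = 0 := by simpa [hd j] using h6
      simp [this]
    · exact mul_nonpos_of_nonneg_of_nonpos (by positivity) (not_lt.1 hj)
  rw [h2, finrank_bot, hk, Module.finrank_fintype_fun_eq_card, Fintype.card_subtype] at h1
  simpa using h1

theorem exists_tau {n : ℕ} (d : Fin n → ℂ) (hd : ∀ i, d i ≠ 0) :
    ∃ τ : ℝ, ∀ i, τ * (d i).re + (d i).im ≠ 0 := by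
  obtain ⟨τ, hτ⟩ := Infinite.exists_notMem_finset (Finset.univ.image (fun i => -(d i).im / (d i).re))
  refine ⟨τ, fun i h => ?_⟩
  by_cases h0 : (d i).re = 0
  · exact hd i (Complex.ext h0 (by simpa [h0] using h))
  · apply hτ
    simp only [Finset.mem_image, Finset.mem_univ, true_and]
    refine ⟨i, ?_⟩
    field_simp
    linarith

theorem diag_concl (B : H →L[ℂ] H) (M : Submodule ℂ H) [FiniteDimensional ℂ M] (k n : ℕ) (e : Fin n → H)
    (he : ∀ i, e i ∈ M)
    (hs : ∀ x ∈ M, ∃ c : Fin n → ℂ, x = ∑ i, c i • e i)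
    (ho : ∀ i j, i ≠ j → ⟪e i, B (e j)⟫_ℂ = 0) (hd : ∀ i, ⟪e i, B (e i)⟫_ℂ ≠ 0)
    (hH : Hyp k B M) : ∃ W ≤ M, Module.finrank ℂ W = k ∧ Iso B W := by
  set d : Fin n → ℂ := fun i => ⟪e i, B (e i)⟫_ℂ with hdd
  obtain ⟨τ, hτ⟩ := exists_tau d hd
  have hcount : ∀ v : ℂ, v.im ≠ 0 → k ≤ (Finset.univ.filter (fun j => 0 < (v * d j).re)).card := by
    intro v hv
    obtain ⟨F, hF, hFk, hFP⟩ := hH v hv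
    exact diag_count B M k n e hs ho hd v F hF hFk hFP
  set r : Fin n → ℝ := fun j => τ * (d j).re + (d j).im with hr
  obtain ⟨x, hx1, hx2, hx3⟩ := diag_comb r (fun j => (d j).re / r j) hτ k
    (by
      refine (hcount (τ - I) (by simp)).trans (Finset.card_le_card ?_)
      intro j; simp [hr])
    (by
      refine (hcount (-(τ - I)) (by simp)).trans (Finset.card_le_card ?_)
      intro j; simp [hr]
      intro h; linarith)
    (by
      intro s hs
      have hrs : ∀ j, r j * ((d j).re / r j - s) = (((1 - s * τ : ℝ) + s * I) * d j).re := by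
        intro j
        have := hτ j
        have h2 : r j * ((d j).re / r j - s) = (d j).re - s * r j := by
          rw [mul_sub, mul_div_cancel₀ _ this]; ring
        rw [h2]
        simp [hr]; ring
      constructor
      · refine (hcount ((1 - s * τ : ℝ) + s * I) (by simpa using hs)).trans (Finset.card_le_card ?_)
        intro j; rw [Finset.mem_filter, Finset.mem_filter, hrs]; exact id
      · refine (hcount (-((1 - s * τ : ℝ) + s * I)) (by simpa using hs)).trans (Finset.card_le_card ?_)
        intro j; rw [Finset.mem_filter, Finset.mem_filter, hrs, neg_mul, Complex.neg_re, neg_pos]; exact id)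
  let f : Fin k → H := fun i => ∑ j, (x i j : ℂ) • e j
  have hB : ∀ i i', ⟪f i, B (f i')⟫_ℂ = 0 := by
    intro i i'
    have h1 : ⟪f i, B (f i')⟫_ℂ = ∑ j, ((x i j * x i' j : ℝ) : ℂ) * d j := by
      simp only [f, map_sum, sum_inner, inner_sum]
      refine Finset.sum_congr rfl fun j _ => ?_
      rw [Finset.sum_eq_single j]
      · rw [map_smul, inner_smul_left, inner_smul_right, Complex.conj_ofReal]; push_cast; ring
      · intro l _ hl
        rw [map_smul, inner_smul_left, inner_smul_right, ho l j hl]; simp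
      · simp
    rw [h1]
    have hre : ∀ j, r j * ((d j).re / r j) = (d j).re := fun j => mul_div_cancel₀ _ (hτ j)
    have hR : ∑ j, (x i j * x i' j) * (d j).re = 0 := by
      rw [← hx2 i i']
      refine Finset.sum_congr rfl fun j _ => ?_
      rw [hre]; ring
    apply Complex.ext
    · rw [Complex.re_sum, Complex.zero_re, ← hR]
      refine Finset.sum_congr rfl fun j _ => ?_
      rw [Complex.re_ofReal_mul]
    · rw [Complex.im_sum, Complex.zero_im]
      have h2 : ∑ j, (((x i j * x i' j : ℝ) : ℂ) * d j).im = ∑ j, r j * (x i j * x i' j) - τ * ∑ j, (x i j * x i' j) * (d j).re := by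
        rw [Finset.mul_sum, ← Finset.sum_sub_distrib]
        refine Finset.sum_congr rfl fun j _ => ?_
        rw [Complex.im_ofReal_mul]
        simp [hr]; ring
      rw [h2, hx1, hR]; simp
  have hli : LinearIndependent ℂ f := by
    rw [Fintype.linearIndependent_iff]
    intro g hg i
    have h1 : ∀ j, ∑ i', g i' * (x i' j : ℂ) = 0 := by
      intro j
      have h2 : ⟪e j, B (∑ i', g i' • f i')⟫_ℂ = (∑ i', g i' * (x i' j : ℂ)) * d j := by
        rw [map_sum, inner_sum, Finset.sum_mul]
        refine Finset.sum_congr rfl fun i' _ => ?_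
        simp only [f, map_sum, map_smul, inner_smul_right, inner_sum]
        rw [Finset.sum_eq_single j]
        · simp [hdd]; ring
        · intro l _ hl
          simp [ho j l (Ne.symm hl)]
        · simp
      rw [hg] at h2
      simp at h2
      rcases h2 with h2 | h2
      · exact h2
      · exact absurd h2 (hd j)
    have h3 : ∑ i', g i' * ((∑ j, |r j| * (x i j * x i' j) : ℝ) : ℂ) = 0 := by
      have : ∀ i', g i' * ((∑ j, |r j| * (x i j * x i' j) : ℝ) : ℂ) = ∑ j, ((|r j| * x i j : ℝ) : ℂ) * (g i' * x i' j) := by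
        intro i'
        rw [Complex.ofReal_sum, Finset.mul_sum]
        refine Finset.sum_congr rfl fun j _ => ?_
        push_cast; ring
      simp_rw [this]
      rw [Finset.sum_comm]
      refine Finset.sum_eq_zero fun j _ => ?_
      rw [← Finset.mul_sum, h1, mul_zero]
    simp_rw [hx3] at h3
    rw [Finset.sum_eq_single i] at h3
    · simpa using h3
    · intro l _ hl
      simp [Ne.symm hl]
    · simp
  refine ⟨Submodule.span ℂ (Set.range f), ?_, ?_, ?_⟩
  · rw [Submodule.span_le]
    rintro _ ⟨i, rfl⟩
    exact M.sum_mem fun j _ => M.smul_mem _ (he j)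
  · rw [finrank_span_eq_card hli]; simp
  · intro a ha b hb
    obtain ⟨u, rfl⟩ := (Submodule.mem_span_range_iff_exists_fun ℂ).1 ha
    obtain ⟨w, rfl⟩ := (Submodule.mem_span_range_iff_exists_fun ℂ).1 hb
    simp [sum_inner, inner_sum, inner_smul_left, inner_smul_right, hB]

theorem fd_thm (B : H →L[ℂ] H) (m : ℕ) : ∀ (k : ℕ) (M : Submodule ℂ H) [FiniteDimensional ℂ M],
    Module.finrank ℂ M = m → Hyp k B M → ∃ W ≤ M, Module.finrank ℂ W = k ∧ Iso B W := by
  induction m using Nat.strong_induction_on with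
  | _ m ih =>
  intro k M _ hm hH
  rcases k with _ | k
  · refine ⟨⊥, bot_le, finrank_bot _ _, ?_⟩
    intro x hx y hy
    rw [Submodule.mem_bot] at hx
    simp [hx]
  by_cases hN : NoIso B M
  · obtain ⟨n, e, he, hs, ho, hd⟩ := diagz B m M hm hN
    exact diag_concl B M (k+1) n e he hs ho hd hH
  · unfold NoIso at hN
    push Not at hN
    obtain ⟨x, hx, hx0, φ, hφ, hxx⟩ := hN
    refine iso_step B M k hH x hx hx0 hxx φ hφ ?_
    intro N hNM hN
    have hFD : FiniteDimensional ℂ N := Submodule.finiteDimensional_of_le hNM.le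
    exact ih _ (hm ▸ Submodule.finrank_lt_finrank_of_lt hNM) k N rfl hN

def Good (k : ℕ) (T : H →L[ℂ] H) (c : ℝ) : Prop :=
  ∃ V : Submodule ℂ H, Module.finrank ℂ V = k ∧ ∀ x ∈ V, c * ‖x‖^2 ≤ (⟪x, T x⟫_ℂ).re

theorem Good.mono {k : ℕ} {T : H →L[ℂ] H} {c c' : ℝ} (h : Good k T c) (hc : c' ≤ c) : Good k T c' := by
  obtain ⟨V, h1, h2⟩ := h
  exact ⟨V, h1, fun x hx => (mul_le_mul_of_nonneg_right hc (by positivity)).trans (h2 x hx)⟩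

theorem pd_of_bound {T : H →L[ℂ] H} {F : Submodule ℂ H} {c : ℝ} (hc : 0 < c)
    (h : ∀ x ∈ F, c * ‖x‖^2 ≤ (⟪x, T x⟫_ℂ).re) : PD T F := by
  intro x hx h0
  refine lt_of_lt_of_le ?_ (h x hx)
  have := norm_pos_iff.2 h0
  positivity

theorem pd_bound {T : H →L[ℂ] H} {F : Submodule ℂ H} [FiniteDimensional ℂ F] (h : PD T F) :
    ∃ c > 0, ∀ x ∈ F, c * ‖x‖^2 ≤ (⟪x, T x⟫_ℂ).re := by
  have : ProperSpace F := FiniteDimensional.proper ℂ F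
  by_cases hF : Nonempty (Metric.sphere (0 : F) 1)
  · obtain ⟨x0, hx0⟩ := hF
    obtain ⟨z, hz, hmin⟩ := (isCompact_sphere (0 : F) 1).exists_isMinOn ⟨x0, hx0⟩
      (f := fun x : F => (⟪(x : H), T x⟫_ℂ).re) (by fun_prop)
    have hz1 : ‖z‖ = 1 := by simpa using hz
    refine ⟨(⟪(z : H), T z⟫_ℂ).re, h z z.2 ?_, ?_⟩
    · intro h0
      have h2 : z = 0 := Subtype.ext h0
      simp [h2] at hz1
    · intro x hx
      by_cases hx0 : x = 0
      · simp [hx0]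
      have hn : ‖x‖ ≠ 0 := norm_ne_zero_iff.2 hx0
      have h3 := hmin (show (((‖x‖⁻¹ : ℝ) : ℂ) • (⟨x, hx⟩ : F)) ∈ Metric.sphere (0:F) 1 by
        simp [norm_smul]; exact inv_mul_cancel₀ hn)
      simp only [Set.mem_ofPred_eq, Submodule.coe_smul, map_smul, inner_smul_left, inner_smul_right,
        Complex.conj_ofReal] at h3
      rw [Complex.re_ofReal_mul, Complex.re_ofReal_mul] at h3
      calc _ ≤ (‖x‖⁻¹ * (‖x‖⁻¹ * (⟪x, T x⟫_ℂ).re)) * ‖x‖^2 := mul_le_mul_of_nonneg_right h3 (by positivity)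
        _ = _ := by field_simp
  · refine ⟨1, one_pos, fun x hx => ?_⟩
    have : x = 0 := by
      by_contra hx0
      have hn : ‖x‖ ≠ 0 := norm_ne_zero_iff.2 hx0
      exact hF ⟨(((‖x‖⁻¹ : ℝ) : ℂ) • (⟨x, hx⟩ : F)), by simp [norm_smul]; exact inv_mul_cancel₀ hn⟩
    simp [this]

theorem re_inner_le (T : H →L[ℂ] H) (x : H) : |(⟪x, T x⟫_ℂ).re| ≤ ‖T‖ * ‖x‖^2 := by
  calc _ ≤ ‖⟪x, T x⟫_ℂ‖ := Complex.abs_re_le_norm _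
    _ ≤ ‖x‖ * ‖T x‖ := norm_inner_le_norm _ _
    _ ≤ ‖x‖ * (‖T‖ * ‖x‖) := by gcongr; exact T.le_opNorm x
    _ = _ := by ring

theorem compact_pd (k : ℕ) (hk : 1 ≤ k) (B : H →L[ℂ] H) (K : Set ℂ) (hK : IsCompact K)
    (h : ∀ v ∈ K, ∃ F : Submodule ℂ H, Module.finrank ℂ F = k ∧ PD (v • B) F) :
    ∃ γ > 0, ∃ M : Submodule ℂ H, FiniteDimensional ℂ M ∧ ∀ v ∈ K, ∃ F ≤ M, Module.finrank ℂ F = k ∧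
      ∀ x ∈ F, γ * ‖x‖^2 ≤ (⟪x, (v • B) x⟫_ℂ).re := by
  refine hK.induction_on (p := fun s => ∃ γ > 0, ∃ M : Submodule ℂ H, FiniteDimensional ℂ M ∧ ∀ v ∈ s, ∃ F ≤ M, Module.finrank ℂ F = k ∧
      ∀ x ∈ F, γ * ‖x‖^2 ≤ (⟪x, (v • B) x⟫_ℂ).re) ?_ ?_ ?_ ?_
  · exact ⟨1, one_pos, ⊥, inferInstance, by simp⟩
  · rintro s t hst ⟨γ, hγ, M, hM, h⟩
    exact ⟨γ, hγ, M, hM, fun v hv => h v (hst hv)⟩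
  · rintro s t ⟨γ, hγ, M, hM, h⟩ ⟨γ', hγ', M', hM', h'⟩
    refine ⟨min γ γ', lt_min hγ hγ', M ⊔ M', inferInstance, ?_⟩
    rintro v (hv | hv)
    · obtain ⟨F, h1, h2, h3⟩ := h v hv
      refine ⟨F, h1.trans le_sup_left, h2, fun x hx => le_trans ?_ (h3 x hx)⟩
      gcongr; exact min_le_left _ _
    · obtain ⟨F, h1, h2, h3⟩ := h' v hv
      refine ⟨F, h1.trans le_sup_right, h2, fun x hx => le_trans ?_ (h3 x hx)⟩
      gcongr; exact min_le_right _ _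
  · intro v hv
    obtain ⟨F, hF, hP⟩ := h v hv
    have hFD : FiniteDimensional ℂ F := Module.finite_of_finrank_pos (by omega)
    obtain ⟨c, hc, hb⟩ := pd_bound hP
    refine ⟨_, mem_nhdsWithin_of_mem_nhds (Metric.ball_mem_nhds v (ε := c / 2 / (‖B‖ + 1)) (by positivity)),
      c / 2, by positivity, F, hFD, ?_⟩
    intro w hw
    refine ⟨F, le_rfl, hF, fun x hx => ?_⟩
    have h1 := hb x hx
    have h2 := re_inner_le ((w - v) • B) x
    have h3 : ‖(w - v) • B‖ ≤ c / 2 := by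
      rw [norm_smul]
      rw [Metric.mem_ball, dist_eq_norm, lt_div_iff₀ (by positivity)] at hw
      nlinarith [norm_nonneg (w - v), norm_nonneg B]
    have h4 : (⟪x, (w • B) x⟫_ℂ).re = (⟪x, (v • B) x⟫_ℂ).re + (⟪x, ((w - v) • B) x⟫_ℂ).re := by
      rw [← Complex.add_re, ← inner_add_right]
      congr 2
      simp [sub_smul]
    rw [h4]
    have h5 := (abs_le.1 h2).1
    have h6 : ‖(w - v) • B‖ * ‖x‖^2 ≤ c / 2 * ‖x‖^2 := by gcongr
    linarith

def D (T : H →L[ℂ] H) : H →L[ℂ] H := T + ContinuousLinearMap.adjoint T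

theorem D_symm (T : H →L[ℂ] H) (x y : H) : ⟪D T x, y⟫_ℂ = ⟪x, D T y⟫_ℂ := by
  simp [D, inner_add_left, inner_add_right, ContinuousLinearMap.adjoint_inner_left,
    ContinuousLinearMap.adjoint_inner_right, add_comm]

theorem D_self (T : H →L[ℂ] H) (x : H) : ⟪x, D T x⟫_ℂ = ((2 * (⟪x, T x⟫_ℂ).re : ℝ) : ℂ) := by
  have h : ⟪x, D T x⟫_ℂ = ⟪x, T x⟫_ℂ + starRingEnd ℂ ⟪x, T x⟫_ℂ := by
    simp [D, inner_add_right, ContinuousLinearMap.adjoint_inner_right]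
  rw [h, Complex.add_conj]

theorem D_neg (T : H →L[ℂ] H) : D (-T) = - D T := by
  simp [D]; abel

theorem D_comm0 (T : H →L[ℂ] H) {x y : H} (h : ⟪x, D T y⟫_ℂ = 0) : ⟪y, D T x⟫_ℂ = 0 := by
  rw [← D_symm]; exact inner_eq_zero_symm.1 h

theorem re_add_form (T : H →L[ℂ] H) (x y : H) :
    (⟪x + y, T (x + y)⟫_ℂ).re = (⟪x, T x⟫_ℂ).re + (⟪y, T y⟫_ℂ).re + (⟪x, D T y⟫_ℂ).re := by
  have : ⟪x, D T y⟫_ℂ = ⟪x, T y⟫_ℂ + starRingEnd ℂ ⟪y, T x⟫_ℂ := by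
    simp [D, inner_add_right, ContinuousLinearMap.adjoint_inner_right]
  rw [this]
  simp only [map_add, inner_add_left, inner_add_right, Complex.add_re, Complex.conj_re]; ring

theorem rad_of_zero (T : H →L[ℂ] H) (N : Submodule ℂ H) (h : ∀ x ∈ N, (⟪x, T x⟫_ℂ).re = 0) :
    ∀ x ∈ N, ∀ y ∈ N, ⟪x, D T y⟫_ℂ = 0 := by
  have h1 : ∀ x ∈ N, ∀ y ∈ N, (⟪x, D T y⟫_ℂ).re = 0 := by
    intro x hx y hy
    have := re_add_form T x y
    rw [h _ (N.add_mem hx hy), h x hx, h y hy] at this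
    linarith
  intro x hx y hy
  apply Complex.ext (h1 x hx y hy)
  have := h1 (I • x) (N.smul_mem _ hx) y hy
  simpa [inner_smul_left] using this

theorem inertia (T : H →L[ℂ] H) (S : Submodule ℂ H) (m : ℕ)
    (hno : ∀ F ≤ S, FiniteDimensional ℂ F → PD T F → Module.finrank ℂ F ≤ m) :
    ∃ E ≤ S, ∃ S1 ≤ S, FiniteDimensional ℂ E ∧ PD T E ∧ E ⊔ S1 = S ∧ (∀ x ∈ S1, (⟪x, T x⟫_ℂ).re ≤ 0) ∧
      ∀ e ∈ E, ∀ y ∈ S1, ⟪e, D T y⟫_ℂ = 0 := by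
  classical
  let P : ℕ → Prop := fun n => ∃ E ≤ S, FiniteDimensional ℂ E ∧ PD T E ∧ Module.finrank ℂ E = n
  have hP0 : P 0 := ⟨⊥, bot_le, inferInstance, by
    intro x hx h0; exact absurd (by simpa using hx) h0, finrank_bot _ _⟩
  obtain ⟨E, hES, hFD, hE, hEn⟩ := Nat.findGreatest_spec (P := P) (Nat.zero_le m) hP0
  have hmax : ∀ F ≤ S, FiniteDimensional ℂ F → PD T F → Module.finrank ℂ F ≤ Module.finrank ℂ E := by
    intro F hF hFF hFP
    rw [hEn]
    exact Nat.le_findGreatest (hno F hF hFF hFP) ⟨F, hF, hFF, hFP, rfl⟩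
  let L : H →ₗ[ℂ] E := E.orthogonalProjectionOnto.toLinearMap ∘ₗ (D T).toLinearMap
  have hL : ∀ (e : E) (y : H), ⟪e, L y⟫_ℂ = ⟪(e : H), D T y⟫_ℂ := by
    intro e y; simp [L]
  have hLk : ∀ y, L y = 0 ↔ ∀ e ∈ E, ⟪e, D T y⟫_ℂ = 0 := by
    intro y
    constructor
    · intro h e he
      rw [← hL ⟨e, he⟩, h, inner_zero_right]
    · intro h
      rw [← inner_self_eq_zero (𝕜 := ℂ), hL]
      exact h _ (L y).2
  have hinj : Function.Injective (L ∘ₗ E.subtype) := by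
    rw [← LinearMap.ker_eq_bot, Submodule.eq_bot_iff]
    intro e he
    by_contra hne
    have h1 := hE e e.2 (by simpa using hne)
    have h2 := (hLk e).1 he e e.2
    rw [D_self] at h2
    norm_cast at h2
    linarith
  have hsurj := LinearMap.surjective_of_injective hinj
  refine ⟨E, hES, S ⊓ LinearMap.ker L, inf_le_left, hFD, hE, ?_, ?_, ?_⟩
  · apply le_antisymm (sup_le hES inf_le_left)
    intro x hx
    obtain ⟨e, he⟩ := hsurj (L x)
    rw [Submodule.mem_sup]
    refine ⟨e, e.2, x - e, ⟨S.sub_mem hx (hES e.2), ?_⟩, by abel⟩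
    change L (x - e) = 0
    rw [map_sub, ← he]; simp
  · rintro y ⟨hyS, hy⟩
    have hy' := (hLk y).1 hy
    by_contra hpos
    push Not at hpos
    have hyE : y ∉ E := by
      intro hyE
      have := hy' y hyE
      rw [D_self] at this
      norm_cast at this
      linarith
    have h1 := hmax (E ⊔ Submodule.span ℂ {y}) (sup_le hES (by rw [Submodule.span_le]; simpa using hyS))
      inferInstance (by
        intro z hz hz0
        obtain ⟨a, ha, b, hb, rfl⟩ := Submodule.mem_sup.1 hz
        obtain ⟨s, rfl⟩ := Submodule.mem_span_singleton.1 hb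
        rw [re_add_form]
        have h3 : (⟪s • y, T (s • y)⟫_ℂ).re = ‖s‖^2 * (⟪y, T y⟫_ℂ).re := by
          rw [map_smul, inner_smul_left, inner_smul_right, ← mul_assoc, Complex.conj_mul']
          norm_cast
          rw [Complex.re_ofReal_mul]
        have h4 : ⟪a, D T (s • y)⟫_ℂ = 0 := by
          rw [map_smul, inner_smul_right, hy' a ha, mul_zero]
        rw [h3, h4]
        by_cases ha0 : a = 0
        · have hs : s ≠ 0 := by
            rintro rfl; simp [ha0] at hz0
          have := norm_pos_iff.2 hs
          simp [ha0]; positivity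
        · have := hE a ha ha0
          simp; positivity)
    rw [sup_span_finrank E y hyE] at h1
    omega
  · rintro e he y ⟨hyS, hy⟩
    exact (hLk y).1 hy e he

theorem decomp (T : H →L[ℂ] H) (S : Submodule ℂ H) (m m' : ℕ)
    (hno : ∀ F ≤ S, FiniteDimensional ℂ F → PD T F → Module.finrank ℂ F ≤ m)
    (hno' : ∀ F ≤ S, FiniteDimensional ℂ F → PD (-T) F → Module.finrank ℂ F ≤ m') :
    ∃ E E' N : Submodule ℂ H, FiniteDimensional ℂ E ∧ FiniteDimensional ℂ E' ∧ PD T E ∧ PD (-T) E' ∧ 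
      E ⊔ E' ⊔ N = S ∧ (∀ x ∈ E, ∀ y ∈ E', ⟪x, D T y⟫_ℂ = 0) ∧ (∀ x ∈ N, ∀ y ∈ S, ⟪x, D T y⟫_ℂ = 0) := by
  obtain ⟨E, hES, S1, hS1, hFD, hE, hs, hneg, ho⟩ := inertia T S m hno
  obtain ⟨E', hES', N, hN, hFD', hE', hs', hneg', ho'⟩ := inertia (-T) S1 m' (fun F hF => hno' F (hF.trans hS1))
  refine ⟨E, E', N, hFD, hFD', hE, hE', by rw [sup_assoc, hs', hs], fun x hx y hy => ho x hx y (hES' hy), ?_⟩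
  have hr := rad_of_zero T N (by
    intro x hx
    have h1 := hneg x (hN hx)
    have h2 := hneg' x hx
    simp at h2
    linarith)
  intro x hx y hy
  rw [← hs, ← hs'] at hy
  obtain ⟨a, ha, b, hb, rfl⟩ := Submodule.mem_sup.1 hy
  obtain ⟨c, hc, d, hd, rfl⟩ := Submodule.mem_sup.1 hb
  have h1 := D_comm0 T (ho a ha x (hN hx))
  have h2 := ho' c hc x hx
  rw [D_neg] at h2
  have h3 : ⟪c, D T x⟫_ℂ = 0 := by simpa using h2
  simp [inner_add_right, h1, D_comm0 T h3, hr x hx d hd]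

theorem quad_pos (a b s t K : ℝ) (ha : 0 < a) (hb : K^2 / a < b) (hs : s ≠ 0 ∨ t ≠ 0) :
    0 < a * s^2 + b * t^2 - K * s * t := by
  rw [div_lt_iff₀ ha] at hb
  by_cases ht : t = 0
  · subst ht
    have hs : s ≠ 0 := by simpa using hs
    have : 0 < s^2 := by positivity
    nlinarith
  · have h2 : 0 < t^2 := by positivity
    have h3 : a * (a * s^2 + b * t^2 - K * s * t) = (a * s - K * t / 2)^2 + (b * a - K^2 / 4) * t^2 := by ring
    have h4 : 0 < (b * a - K^2 / 4) * t^2 := mul_pos (by nlinarith [sq_nonneg K]) h2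
    have h5 : 0 < a * (a * s^2 + b * t^2 - K * s * t) := by rw [h3]; positivity
    exact (pos_iff_pos_of_mul_pos h5).1 ha

theorem form_lower (X : H →L[ℂ] H) (a b : H) :
    (⟪a, X a⟫_ℂ).re - (‖X‖ + ‖D X‖) * ‖b‖^2 - (‖X‖ + ‖D X‖) * ‖a‖ * ‖b‖ ≤ (⟪a + b, X (a + b)⟫_ℂ).re := by
  rw [re_add_form]
  have h1 := (abs_le.1 (re_inner_le X b)).1
  have h2 : |(⟪a, D X b⟫_ℂ).re| ≤ ‖D X‖ * ‖a‖ * ‖b‖ := by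
    calc _ ≤ ‖⟪a, D X b⟫_ℂ‖ := Complex.abs_re_le_norm _
      _ ≤ ‖a‖ * ‖D X b‖ := norm_inner_le_norm _ _
      _ ≤ ‖a‖ * (‖D X‖ * ‖b‖) := by gcongr; exact (D X).le_opNorm b
      _ = _ := by ring
  have h3 := (abs_le.1 h2).1
  have h4 : 0 ≤ ‖X‖ * ‖a‖ * ‖b‖ := by positivity
  have h5 : 0 ≤ ‖D X‖ * ‖b‖^2 := by positivity
  nlinarith

theorem end_lemma (k : ℕ) (hk : 1 ≤ k) (G X : H →L[ℂ] H) (E E' N : Submodule ℂ H) [FiniteDimensional ℂ E]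
    [FiniteDimensional ℂ E'] (hE : PD G E) (hE' : PD (-G) E') (hs : E ⊔ E' ⊔ N = ⊤)
    (ho : ∀ x ∈ E, ∀ y ∈ E', ⟪x, D G y⟫_ℂ = 0) (hN : ∀ x ∈ N, ∀ y, ⟪x, D G y⟫_ℂ = 0)
    (ε : ℝ) (hε : 0 < ε) (hg : ∀ τ : ℝ, 0 < τ → Good k ((τ : ℂ) • G + X) ε) :
    ∃ M : Submodule ℂ H, FiniteDimensional ℂ M ∧ ∃ τ0 : ℝ, ∀ τ ≥ τ0, ∃ F ≤ M, Module.finrank ℂ F = k ∧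
      PD ((τ : ℂ) • G + X) F := by
  obtain ⟨γ, hγ, hbE⟩ := pd_bound hE
  obtain ⟨γ', hγ', hbE'⟩ := pd_bound hE'
  set K := ‖X‖ + ‖D X‖ with hK
  have hK0 : 0 ≤ K := by positivity
  have hform : ∀ (τ : ℝ) (y : H), (⟪y, ((τ:ℂ) • G + X) y⟫_ℂ).re = τ * (⟪y, G y⟫_ℂ).re + (⟪y, X y⟫_ℂ).re := by
    intro τ y
    have : ⟪y, ((τ:ℂ) • G + X) y⟫_ℂ = (τ:ℂ) * ⟪y, G y⟫_ℂ + ⟪y, X y⟫_ℂ := by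
      rw [add_apply, smul_apply, inner_add_right, inner_smul_right]
    rw [this, Complex.add_re, Complex.re_ofReal_mul]
  have hNz : ∀ x ∈ N, ∀ y, (⟪x + y, G (x + y)⟫_ℂ).re = (⟪y, G y⟫_ℂ).re := by
    intro x hx y
    have h1 := hN x hx x
    rw [D_self] at h1
    norm_cast at h1
    rw [re_add_form, hN x hx y, Complex.zero_re]; linarith
  obtain ⟨τ1, hτ1, hτ1'⟩ : ∃ τ1 : ℝ, 0 < τ1 ∧ K^2 / ε < τ1 * γ' - K := by
    refine ⟨(K^2/ε + K + 1) / γ', by positivity, ?_⟩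
    rw [div_mul_cancel₀ _ hγ'.ne']; linarith
  obtain ⟨V, hVk, hV⟩ := hg τ1 hτ1
  have hVF : FiniteDimensional ℂ V := Module.finite_of_finrank_pos (by omega)
  let L : H →ₗ[ℂ] E := E.orthogonalProjectionOnto.toLinearMap ∘ₗ (D G).toLinearMap
  have hL : ∀ (e : E) (y : H), ⟪e, L y⟫_ℂ = ⟪(e : H), D G y⟫_ℂ := by
    intro e y; simp [L]
  set V1 : Submodule ℂ H := V ⊓ LinearMap.ker L with hV1
  have hV1F : FiniteDimensional ℂ V1 := Submodule.finiteDimensional_of_le inf_le_left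
  have hV1k := finrank_le_inf_ker V L
  rw [← hV1] at hV1k
  have hV1m : ∀ y ∈ V1, y ∈ E' ⊔ N := by
    rintro y ⟨-, hy⟩
    have hy' : L y = 0 := hy
    have : y ∈ E ⊔ E' ⊔ N := hs ▸ Submodule.mem_top
    rw [sup_assoc] at this
    obtain ⟨a, ha, b, hb, rfl⟩ := Submodule.mem_sup.1 this
    have hb0 : ⟪a, D G b⟫_ℂ = 0 := by
      obtain ⟨c, hc, d, hd, rfl⟩ := Submodule.mem_sup.1 hb
      simp [inner_add_right, ho a ha c hc, D_comm0 G (hN d hd a)]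
    have h1 := hL ⟨a, ha⟩ (a + b)
    rw [hy', inner_zero_right] at h1
    rw [map_add, inner_add_right, hb0, D_self, add_zero] at h1
    norm_cast at h1
    have ha0 : a = 0 := by
      by_contra hne
      have := hE a ha hne
      linarith
    rw [ha0, zero_add]; exact hb
  have claim1 : ∀ y ∈ V1, ∀ e ∈ E', y + e ∈ N → (y ≠ 0 ∨ e ≠ 0) → 0 < (⟪y + e, X (y + e)⟫_ℂ).re := by
    intro y hy e he hz hne
    have h1 := form_lower X y e
    have h2 := hV y hy.1
    rw [hform] at h2
    have h3 := hNz (y + e) hz (-e)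
    have h4 : y + e + -e = y := by abel
    rw [h4] at h3
    have h5 := hbE' (-e) (E'.neg_mem he)
    have h6 : (⟪-e, (-G) (-e)⟫_ℂ).re = -(⟪-e, G (-e)⟫_ℂ).re := by simp
    rw [h6, norm_neg] at h5
    have h7 := quad_pos ε (τ1 * γ' - K) ‖y‖ ‖e‖ K hε hτ1' (by simpa using hne)
    rw [h3] at h2
    have h8 : τ1 * (γ' * ‖e‖^2) ≤ τ1 * -(⟪-e, G (-e)⟫_ℂ).re := by gcongr
    rw [← hK] at h1
    nlinarith
  have claim2 : V1 ⊓ E' = ⊥ := by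
    rw [Submodule.eq_bot_iff]
    rintro y ⟨hy, hy'⟩
    by_contra hne
    have := claim1 y hy (-y) (E'.neg_mem hy') (by simp) (Or.inl hne)
    simp at this
  set F' : Submodule ℂ H := (V1 ⊔ E') ⊓ N with hF'
  have hF'F : FiniteDimensional ℂ F' := Submodule.finiteDimensional_of_le inf_le_left
  have hle : V1 ⊔ E' ≤ F' ⊔ E' := by
    intro v hv
    obtain ⟨y, hy, e, he, rfl⟩ := Submodule.mem_sup.1 hv
    obtain ⟨e2, he2, n, hn, rfl⟩ := Submodule.mem_sup.1 (hV1m y hy)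
    have h1 : n ∈ F' := by
      refine ⟨Submodule.mem_sup.2 ⟨e2 + n, hy, -e2, E'.neg_mem he2, by abel⟩, hn⟩
    exact Submodule.mem_sup.2 ⟨n, h1, e2 + e, E'.add_mem he2 he, by abel⟩
  have hfin : Module.finrank ℂ V1 ≤ Module.finrank ℂ F' := by
    have h1 := Submodule.finrank_sup_add_finrank_inf_eq V1 E'
    rw [claim2, finrank_bot] at h1
    have h2 := Submodule.finrank_mono hle
    have h3 := Submodule.finrank_add_le_finrank_add_finrank F' E'
    omega
  have hPF : PD X F' := by
    rintro z ⟨hz, hzN⟩ hz0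
    obtain ⟨y, hy, e, he, rfl⟩ := Submodule.mem_sup.1 hz
    refine claim1 y hy e he hzN ?_
    by_contra hcon
    push Not at hcon
    simp [hcon.1, hcon.2] at hz0
  obtain ⟨c, hc, hbF⟩ := pd_bound hPF
  have hEF : E ⊓ F' = ⊥ := by
    rw [Submodule.eq_bot_iff]
    rintro x ⟨hx, hx', hxN⟩
    by_contra hne
    have h1 := hE x hx hne
    have h2 := hN x hxN x
    rw [D_self] at h2
    norm_cast at h2
    linarith
  have hkM : k ≤ Module.finrank ℂ (E ⊔ F' : Submodule ℂ H) := by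
    have h1 := Submodule.finrank_sup_add_finrank_inf_eq E F'
    rw [hEF, finrank_bot] at h1
    omega
  obtain ⟨F, hFM, hFk⟩ := exists_sub_finrank (E ⊔ F') k hkM
  refine ⟨E ⊔ F', inferInstance, (K^2 / c + K + 1) / γ, fun τ hτ => ⟨F, hFM, hFk, ?_⟩⟩
  intro x hx hx0
  obtain ⟨e, he, f, hf, rfl⟩ := Submodule.mem_sup.1 (hFM hx)
  rw [hform]
  have hτ0 : K^2 / c + K + 1 ≤ τ * γ := (div_le_iff₀ hγ).1 hτ
  have hτpos : 0 ≤ τ := le_trans (by positivity) hτ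
  have h1 := form_lower X f e
  rw [add_comm f e, ← hK] at h1
  have h2 := hNz f hf.2 e
  rw [add_comm f e] at h2
  have h3 := hbE e he
  have h4 := hbF f hf
  have h5 := quad_pos c (τ * γ - K) ‖f‖ ‖e‖ K hc (by linarith) (by
    by_contra hcon
    push Not at hcon
    simp only [norm_eq_zero] at hcon
    simp [hcon.1, hcon.2] at hx0)
  have h6 : τ * (γ * ‖e‖^2) ≤ τ * (⟪e, G e⟫_ℂ).re := by gcongr
  rw [h2]
  nlinarith

theorem pd_smul_pos {T : H →L[ℂ] H} {F : Submodule ℂ H} {r : ℝ} (hr : 0 < r) (v : ℂ) (h : PD (v • T) F) :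
    PD (((r : ℂ) * v) • T) F := by
  intro x hx h0
  have h1 := h x hx h0
  rw [smul_apply, inner_smul_right] at h1 ⊢
  rw [mul_assoc, Complex.re_ofReal_mul]
  positivity

theorem core2 (k : ℕ) (hk : 1 ≤ k) (B : H →L[ℂ] H) (E E' N : Submodule ℂ H) [FiniteDimensional ℂ E]
    [FiniteDimensional ℂ E'] (hE : PD B E) (hE' : PD (-B) E') (hs : E ⊔ E' ⊔ N = ⊤)
    (ho : ∀ x ∈ E, ∀ y ∈ E', ⟪x, D B y⟫_ℂ = 0) (hN : ∀ x ∈ N, ∀ y, ⟪x, D B y⟫_ℂ = 0)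
    (ε : ℝ) (hε : 0 < ε) (hg : ∀ v : ℂ, v.im ≠ 0 → Good k (v • B) (ε * |v.im|)) :
    ∃ W : Submodule ℂ H, Module.finrank ℂ W = k ∧ Iso B W := by
  have ends : ∀ σ σ' : ℝ, |σ| = 1 → |σ'| = 1 → ∃ M : Submodule ℂ H, FiniteDimensional ℂ M ∧ ∃ τ0 : ℝ, ∀ τ ≥ τ0, ∃ F ≤ M,
      Module.finrank ℂ F = k ∧ PD ((((σ * τ : ℝ) : ℂ) + (σ' : ℂ) * I) • B) F := by
    intro σ σ' hσ hσ'
    have hop : ∀ τ : ℝ, (τ : ℂ) • ((σ : ℂ) • B) + ((σ' : ℂ) * I) • B = ((((σ * τ : ℝ) : ℂ) + (σ' : ℂ) * I) • B) := by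
      intro τ
      rw [smul_smul, ← add_smul]; congr 1; push_cast; ring
    have hgg : ∀ τ : ℝ, 0 < τ → Good k ((τ : ℂ) • ((σ : ℂ) • B) + ((σ' : ℂ) * I) • B) ε := by
      intro τ _
      rw [hop]
      have h1 := hg ((((σ * τ : ℝ) : ℂ) + (σ' : ℂ) * I)) (by
        have : σ' ≠ 0 := by rintro rfl; simp at hσ'
        simpa using this)
      refine h1.mono (le_of_eq ?_)
      simp [hσ']
    have key : ∃ M : Submodule ℂ H, FiniteDimensional ℂ M ∧ ∃ τ0 : ℝ, ∀ τ ≥ τ0, ∃ F ≤ M, Module.finrank ℂ F = k ∧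
      PD ((τ : ℂ) • ((σ : ℂ) • B) + ((σ' : ℂ) * I) • B) F := by
      rcases eq_or_eq_neg_of_abs_eq hσ with h | h
      · subst h
        have h1 : (((1:ℝ) : ℂ) • B) = B := by simp
        rw [h1] at hgg ⊢
        exact end_lemma k hk B _ E E' N hE hE' hs ho hN ε hε hgg
      · subst h
        have h1 : (((-1:ℝ) : ℂ) • B) = -B := by simp
        rw [h1] at hgg ⊢
        refine end_lemma k hk (-B) _ E' E N hE' (by rwa [neg_neg]) (by rwa [sup_comm E' E]) ?_ ?_ ε hε hgg
        · intro x hx y hy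
          rw [D_neg, neg_apply, inner_neg_right, D_comm0 B (ho y hy x hx), neg_zero]
        · intro x hx y
          rw [D_neg, neg_apply, inner_neg_right, hN x hx y, neg_zero]
    simp_rw [hop] at key
    exact key
  obtain ⟨M1, f1, t1, h1⟩ := ends 1 1 (by simp) (by simp)
  obtain ⟨M2, f2, t2, h2⟩ := ends 1 (-1) (by simp) (by simp)
  obtain ⟨M3, f3, t3, h3⟩ := ends (-1) 1 (by simp) (by simp)
  obtain ⟨M4, f4, t4, h4⟩ := ends (-1) (-1) (by simp) (by simp)
  set R := |t1| + |t2| + |t3| + |t4| with hR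
  let K : Set ℂ := (Metric.closedBall (0:ℂ) (R + 1)) ∩ {v | |v.im| = 1}
  have hK : IsCompact K := (isCompact_closedBall _ _).inter_right
    (isClosed_eq (by fun_prop) continuous_const)
  obtain ⟨γ, hγ, M5, f5, h5⟩ := compact_pd k hk B K hK (by
    rintro v ⟨-, hv⟩
    have hv' : v.im ≠ 0 := by rintro h; simp [h] at hv
    obtain ⟨V, a, b⟩ := hg v hv'
    exact ⟨V, a, pd_of_bound (by positivity) b⟩)
  have hle : ∀ M, M ≤ M1 ∨ M ≤ M2 ∨ M ≤ M3 ∨ M ≤ M4 ∨ M ≤ M5 → M ≤ M1 ⊔ M2 ⊔ M3 ⊔ M4 ⊔ M5 := by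
    rintro M (h | h | h | h | h)
    · exact h.trans (le_sup_left.trans (le_sup_left.trans (le_sup_left.trans le_sup_left)))
    · exact h.trans (le_sup_right.trans (le_sup_left.trans (le_sup_left.trans le_sup_left)))
    · exact h.trans (le_sup_right.trans (le_sup_left.trans le_sup_left))
    · exact h.trans (le_sup_right.trans le_sup_left)
    · exact h.trans le_sup_right
  have hyp1 : ∀ v : ℂ, |v.im| = 1 → ∃ F ≤ M1 ⊔ M2 ⊔ M3 ⊔ M4 ⊔ M5, Module.finrank ℂ F = k ∧ PD (v • B) F := by
    intro v hv
    have a1 := le_abs_self t1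
    have a2 := le_abs_self t2
    have a3 := le_abs_self t3
    have a4 := le_abs_self t4
    have b1 := abs_nonneg t1
    have b2 := abs_nonneg t2
    have b3 := abs_nonneg t3
    have b4 := abs_nonneg t4
    by_cases hb : |v.re| ≤ R
    · obtain ⟨F, hF, hFk, hFb⟩ := h5 v ⟨by
        rw [mem_closedBall_zero_iff]
        refine (Complex.norm_le_abs_re_add_abs_im v).trans ?_
        linarith, hv⟩
      exact ⟨F, hle F (by tauto), hFk, pd_of_bound hγ hFb⟩
    · push Not at hb
      rcases eq_or_eq_neg_of_abs_eq hv with hi | hi <;> rcases lt_abs.1 hb with hr | hr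
      · obtain ⟨F, hF, hFk, hFb⟩ := h1 v.re (by linarith)
        refine ⟨F, hle F (by tauto), hFk, ?_⟩
        convert hFb using 2
        apply Complex.ext <;> simp [hi]
      · obtain ⟨F, hF, hFk, hFb⟩ := h3 (-v.re) (by linarith)
        refine ⟨F, hle F (by tauto), hFk, ?_⟩
        convert hFb using 2
        apply Complex.ext <;> simp [hi]
      · obtain ⟨F, hF, hFk, hFb⟩ := h2 v.re (by linarith)
        refine ⟨F, hle F (by tauto), hFk, ?_⟩
        convert hFb using 2
        apply Complex.ext <;> simp [hi]
      · obtain ⟨F, hF, hFk, hFb⟩ := h4 (-v.re) (by linarith)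
        refine ⟨F, hle F (by tauto), hFk, ?_⟩
        convert hFb using 2
        apply Complex.ext <;> simp [hi]
  have hyp : Hyp k B (M1 ⊔ M2 ⊔ M3 ⊔ M4 ⊔ M5) := by
    intro v hv
    have hv' : 0 < |v.im| := abs_pos.2 hv
    obtain ⟨F, hF, hFk, hFP⟩ := hyp1 (((|v.im|⁻¹ : ℝ) : ℂ) * v) (by
      rw [Complex.im_ofReal_mul, abs_mul, abs_inv, abs_abs, inv_mul_cancel₀ hv'.ne'])
    refine ⟨F, hF, hFk, ?_⟩
    have := pd_smul_pos hv' _ hFP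
    rwa [← mul_assoc, ← Complex.ofReal_mul, mul_inv_cancel₀ hv'.ne', Complex.ofReal_one, one_mul] at this
  obtain ⟨W, -, hW⟩ := fd_thm B _ k _ rfl hyp
  exact ⟨W, hW⟩

theorem exists_finrank_of_inf {E : Type*} [AddCommGroup E] [Module ℂ E] (N : Submodule ℂ E)
    (h : ¬ FiniteDimensional ℂ N) (k : ℕ) : ∃ W ≤ N, Module.finrank ℂ W = k := by
  have h1 : (k : Cardinal) ≤ Module.rank ℂ N := by
    have : Cardinal.aleph0 ≤ Module.rank ℂ N := by
      by_contra hc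
      exact h (Module.rank_lt_aleph0_iff.1 (not_le.1 hc))
    exact (Cardinal.natCast_lt_aleph0.le).trans this
  obtain ⟨f, hf⟩ := exists_linearIndependent_of_le_rank h1
  have hf' : LinearIndependent ℂ (fun i => (f i : E)) := hf.map' N.subtype N.ker_subtype
  refine ⟨Submodule.span ℂ (Set.range (fun i => (f i : E))), ?_, ?_⟩
  · rw [Submodule.span_le]
    rintro _ ⟨i, rfl⟩
    exact (f i).2
  · rw [finrank_span_eq_card hf']; simp

theorem finrank_le_codim {E : Type*} [AddCommGroup E] [Module ℂ E] (E0 S F : Submodule ℂ E)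
    [FiniteDimensional ℂ E0] [FiniteDimensional ℂ F] (h : E0 ⊔ S = ⊤) (hF : F ⊓ S = ⊥) :
    Module.finrank ℂ F ≤ Module.finrank ℂ E0 := by
  have h1 : E0.map S.mkQ = ⊤ := by
    rw [eq_top_iff]
    rintro x -
    obtain ⟨y, rfl⟩ := S.mkQ_surjective x
    have : y ∈ E0 ⊔ S := h ▸ Submodule.mem_top
    obtain ⟨a, ha, b, hb, rfl⟩ := Submodule.mem_sup.1 this
    refine ⟨a, ha, ?_⟩
    rw [map_add]
    have : S.mkQ b = 0 := by simpa using hb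
    rw [this, add_zero]
  have h2 : Module.finrank ℂ (F.map S.mkQ) = Module.finrank ℂ F := by
    apply finrank_map_inj
    intro x hx h0
    have : x ∈ F ⊓ S := ⟨hx, by simpa using h0⟩
    rw [hF] at this
    simpa using this
  rw [← h2]
  have h3 : FiniteDimensional ℂ (E0.map S.mkQ) := inferInstance
  exact (Submodule.finrank_mono (h1 ▸ le_top)).trans (Submodule.finrank_map_le S.mkQ E0)

def Om (k : ℕ) (B : H →L[ℂ] H) : Set ℂ :=
  {w | ∀ u : ℂ, ‖u‖ = 1 → ∀ ε > 0, Good k (u • B) ((u * w).re - ε)}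

theorem finite_codim (B : H →L[ℂ] H) (k : ℕ) (s : Finset ℂ)
    (hs : ∀ u ∈ s, ∀ F : Submodule ℂ H, FiniteDimensional ℂ F → PD (u • B) F → Module.finrank ℂ F ≤ k) :
    ∃ E S : Submodule ℂ H, FiniteDimensional ℂ E ∧ E ⊔ S = ⊤ ∧ ∀ u ∈ s, ∀ x ∈ S, (⟪x, (u • B) x⟫_ℂ).re ≤ 0 := by
  classical
  induction s using Finset.induction_on with
  | empty => exact ⟨⊥, ⊤, inferInstance, by simp, by simp⟩
  | insert a s ha ih =>
    obtain ⟨E, S, hE, hES, hS⟩ := ih (fun u hu => hs u (Finset.mem_insert_of_mem hu))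
    obtain ⟨E1, hE1, S1, hS1, hF1, -, hsup, hneg, -⟩ := inertia (a • B) S k
      (fun F _ => hs a (Finset.mem_insert_self _ _) F)
    refine ⟨E ⊔ E1, S1, inferInstance, by rw [sup_assoc, hsup, hES], ?_⟩
    intro u hu x hx
    rcases Finset.mem_insert.1 hu with rfl | hu
    · exact hneg x hx
    · exact hS u hu x (hS1 hx)

theorem good_scale {k : ℕ} {B : H →L[ℂ] H} {u : ℂ} {c r : ℝ} (hr : 0 < r) (h : Good k (u • B) c) :
    Good k (((r:ℂ) * u) • B) (r * c) := by
  obtain ⟨V, h1, h2⟩ := h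
  refine ⟨V, h1, fun x hx => ?_⟩
  have := h2 x hx
  rw [smul_apply, inner_smul_right] at this ⊢
  rw [mul_assoc, mul_assoc, Complex.re_ofReal_mul]
  gcongr

theorem no_pd_le {k : ℕ} {T : H →L[ℂ] H} {S : Submodule ℂ H}
    (h : ¬ ∃ F ≤ S, Module.finrank ℂ F = k ∧ PD T F) :
    ∀ F ≤ S, FiniteDimensional ℂ F → PD T F → Module.finrank ℂ F ≤ k := by
  intro F hFS hF hP
  by_contra hc
  push Not at hc
  obtain ⟨F', h1, h2⟩ := exists_sub_finrank F k hc.le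
  exact h ⟨F', h1.trans hFS, h2, fun x hx => hP x (h1 hx)⟩

/-- one direction `B` with no `k`-dimensional positive subspaces and boundedly many negative ones -/
theorem core3 (k : ℕ) (hk : 1 ≤ k) (hH : ¬ FiniteDimensional ℂ H) (B : H →L[ℂ] H) (m : ℕ)
    (h0 : (0:ℂ) ∈ Om k B) (hsym : ∀ w ∈ Om k B, ∃ δ : ℝ, 0 < δ ∧ -(δ : ℂ) * w ∈ Om k B)
    (hno : ∀ F : Submodule ℂ H, FiniteDimensional ℂ F → PD B F → Module.finrank ℂ F ≤ k)
    (hno' : ∀ F : Submodule ℂ H, FiniteDimensional ℂ F → PD (-B) F → Module.finrank ℂ F ≤ m) :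
    ∃ W : Submodule ℂ H, Module.finrank ℂ W = k ∧ Iso B W := by
  obtain ⟨E, E', N, hFE, hFE', hE, hE', hs, ho, hN⟩ := decomp B ⊤ k m (fun F _ => hno F) (fun F _ => hno' F)
  have hN' : ∀ x ∈ N, ∀ y, ⟪x, D B y⟫_ℂ = 0 := fun x hx y => hN x hx y trivial
  have hNzero : ∀ x ∈ N, (⟪x, B x⟫_ℂ).re = 0 := by
    intro x hx
    have := hN' x hx x
    rw [D_self] at this
    norm_cast at this
    linarith
  by_cases hX : (¬ ∃ F ≤ N, Module.finrank ℂ F = k ∧ PD (I • B) F) ∧ (¬ ∃ F ≤ N, Module.finrank ℂ F = k ∧ PD (-(I • B)) F)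
  · obtain ⟨C, C', N2, hFC, hFC', -, -, hs2, -, hN2⟩ := decomp (I • B) N k k (no_pd_le hX.1) (no_pd_le hX.2)
    have hN2N : N2 ≤ N := hs2 ▸ le_sup_right
    have hinf : ¬ FiniteDimensional ℂ N2 := by
      intro hf
      have h1 : FiniteDimensional ℂ (E ⊔ E' ⊔ (C ⊔ C' ⊔ N2) : Submodule ℂ H) := inferInstance
      rw [hs2, hs] at h1
      exact hH (Module.Finite.equiv (Submodule.topEquiv (R := ℂ) (M := H)))
    obtain ⟨W, hW, hWk⟩ := exists_finrank_of_inf N2 hinf k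
    refine ⟨W, hWk, ?_⟩
    intro x hx y hy
    have h1 := hN' x (hN2N (hW hx)) y
    have h2 := hN2 x (hW hx) y (hN2N (hW hy))
    simp only [D, map_smulₛₗ, add_apply, smul_apply, inner_add_right, inner_smul_right, Complex.conj_I] at h1 h2
    have h3 : I * (2 * ⟪x, B y⟫_ℂ) = 0 := by linear_combination h2 + I * h1
    simpa using h3
  · have hF : ∃ σ : ℝ, |σ| = 1 ∧ ∃ F ≤ N, Module.finrank ℂ F = k ∧ PD (((σ:ℂ) * I) • B) F := by
      by_cases h1 : ∃ F ≤ N, Module.finrank ℂ F = k ∧ PD (I • B) F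
      · exact ⟨1, by simp, by simpa using h1⟩
      · refine ⟨-1, by simp, ?_⟩
        simp only [h1, not_false_eq_true, true_and, not_not] at hX
        simpa using hX
    obtain ⟨σ, hσ, F, hFN, hFk, hFP⟩ := hF
    have hFF : FiniteDimensional ℂ F := Module.finite_of_finrank_pos (by omega)
    obtain ⟨γ, hγ, hb⟩ := pd_bound hFP
    have hσσ : σ * σ = 1 := by
      rw [← abs_mul_abs_self, hσ, one_mul]
    have hw : (-(σ * γ : ℝ) * I : ℂ) ∈ Om k B := by
      intro u hu ε hε
      have hre : (u * (-(σ * γ : ℝ) * I : ℂ)).re = u.im * σ * γ := by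
        simp; ring
      rw [hre]
      by_cases hs : 0 ≤ u.im * σ
      · refine ⟨F, hFk, fun x hx => ?_⟩
        have h1 := hb x hx
        have h2 := hNzero x (hFN hx)
        rw [smul_apply, inner_smul_right] at h1 ⊢
        rw [mul_assoc, Complex.re_ofReal_mul, Complex.mul_re] at h1
        simp at h1
        rw [Complex.mul_re, h2]
        have h3 := mul_le_mul_of_nonneg_left h1 hs
        have h4 : 0 ≤ ε * ‖x‖^2 := by positivity
        have h5 : u.im * σ * (σ * -(⟪x, B x⟫_ℂ).im) = - (u.im * (⟪x, B x⟫_ℂ).im) := by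
          linear_combination (-(u.im * (⟪x, B x⟫_ℂ).im)) * hσσ
        simp only [mul_neg] at h3 h5
        nlinarith
      · push Not at hs
        refine (h0 u hu ε hε).mono ?_
        simp; nlinarith
    obtain ⟨δ, hδ, hw'⟩ := hsym _ hw
    set ε := min γ (δ * γ) / 2 with hε
    have hεpos : 0 < ε := by
      have : 0 < min γ (δ * γ) := lt_min hγ (by positivity)
      positivity
    have e1 : 2 * ε ≤ γ := by
      have := min_le_left γ (δ * γ); rw [hε]; linarith
    have e2 : 2 * ε ≤ δ * γ := by
      have := min_le_right γ (δ * γ); rw [hε]; linarith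
    have hunit : ∀ u : ℂ, ‖u‖ = 1 → u.im ≠ 0 → Good k (u • B) (ε * |u.im|) := by
      intro u hu hi
      have hi' := abs_pos.2 hi
      have habs : |u.im * σ| = |u.im| := by rw [abs_mul, hσ, mul_one]
      rcases le_total 0 (u.im * σ) with hs | hs
      · rw [abs_of_nonneg hs] at habs
        refine (hw u hu (ε * |u.im|) (by positivity)).mono ?_
        have hre : (u * (-(σ * γ : ℝ) * I : ℂ)).re = u.im * σ * γ := by
          simp; ring
        rw [hre, habs]
        nlinarith
      · rw [abs_of_nonpos hs] at habs
        refine (hw' u hu (ε * |u.im|) (by positivity)).mono ?_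
        have hre : (u * (-(δ:ℂ) * (-(σ * γ : ℝ) * I : ℂ))).re = -(u.im * σ) * (δ * γ) := by
          simp; ring
        rw [hre, habs]
        nlinarith
    refine core2 k hk B E E' N hE hE' hs ho hN' ε hεpos ?_
    intro v hv
    have hv0 : v ≠ 0 := by rintro rfl; simp at hv
    have hn : 0 < ‖v‖ := norm_pos_iff.2 hv0
    have him : (((‖v‖⁻¹ : ℝ) : ℂ) * v).im = ‖v‖⁻¹ * v.im := Complex.im_ofReal_mul _ _
    have h1 := hunit (((‖v‖⁻¹ : ℝ) : ℂ) * v) (by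
      rw [norm_mul, Complex.norm_real, norm_inv, norm_norm, inv_mul_cancel₀ hn.ne']) (by
      rw [him]; positivity)
    have h2 := good_scale hn h1
    rw [← mul_assoc, ← Complex.ofReal_mul, mul_inv_cancel₀ hn.ne', Complex.ofReal_one, one_mul, him] at h2
    refine h2.mono (le_of_eq ?_)
    rw [abs_mul, abs_inv, abs_norm]
    field_simp

theorem isClosed_hull (Z : Set ℂ) (hZ : IsCompact Z) : IsClosed (convexHull ℝ Z) := by
  let f : (Fin 3 → ℝ) × (Fin 3 → ℂ) → ℂ := fun p => ∑ i, p.1 i • p.2 i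
  have hf : Continuous f := by fun_prop
  have hK : IsCompact (stdSimplex ℝ (Fin 3) ×ˢ Set.pi Set.univ (fun _ : Fin 3 => Z)) :=
    (isCompact_stdSimplex ℝ (Fin 3)).prod (isCompact_univ_pi fun _ => hZ)
  have : convexHull ℝ Z = f '' (stdSimplex ℝ (Fin 3) ×ˢ Set.pi Set.univ (fun _ : Fin 3 => Z)) := by
    apply Set.Subset.antisymm
    · intro x hx
      rw [convexHull_eq_union] at hx
      simp only [Set.mem_iUnion] at hx
      obtain ⟨t, htZ, hai, hxt⟩ := hx
      have hcard := hai.card_le_finrank_succ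
      have hfr : Module.finrank ℝ (vectorSpan ℝ (Set.range ((↑) : t → ℂ))) ≤ 2 := by
        refine (Submodule.finrank_le _).trans ?_
        rw [Complex.finrank_real_complex]
      have hc3 : Fintype.card t ≤ Fintype.card (Fin 3) := by
        rw [Fintype.card_fin]; omega
      obtain ⟨e⟩ := Function.Embedding.nonempty_of_card_le hc3
      have htne : t.Nonempty := by
        rw [← Finset.coe_nonempty, ← convexHull_nonempty_iff (𝕜 := ℝ)]
        exact ⟨x, hxt⟩
      have hne : Nonempty t := htne.to_subtype
      let z : Fin 3 → ℂ := fun i => (Function.invFun e i : t)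
      have hr : (t : Set ℂ) ⊆ Set.range z := by
        intro y hy
        exact ⟨e ⟨y, hy⟩, by simp [z, Function.leftInverse_invFun e.injective _]⟩
      let L : (Fin 3 → ℝ) →ₗ[ℝ] ℂ := ∑ i, (LinearMap.proj i).smulRight (z i)
      have hL : ∀ w, L w = ∑ i, w i • z i := by
        intro w; simp [L]
      have hx2 : x ∈ L '' stdSimplex ℝ (Fin 3) := by
        rw [← convexHull_rangle_single_eq_stdSimplex, LinearMap.image_convexHull]
        refine convexHull_mono (hr.trans ?_) hxt
        rintro _ ⟨i, rfl⟩
        refine ⟨_, ⟨i, rfl⟩, ?_⟩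
        rw [hL]
        simp [Pi.single_apply]
      obtain ⟨w, hw, rfl⟩ := hx2
      exact ⟨(w, z), ⟨hw, fun i _ => htZ (Function.invFun e i : t).2⟩, (hL w).symm⟩
    · rintro _ ⟨⟨w, z⟩, ⟨hw, hz⟩, rfl⟩
      exact (convex_convexHull ℝ Z).sum_mem (fun i _ => hw.1 i) hw.2
        (fun i _ => subset_convexHull ℝ Z (hz i trivial))
  rw [this]
  exact (hK.image hf).isClosed

theorem om_rot (k : ℕ) (B : H →L[ℂ] H) (u0 w : ℂ) (hu0 : ‖u0‖ = 1) (hw : w ∈ Om k B) : u0 * w ∈ Om k (u0 • B) := by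
  intro u hu ε hε
  have := hw (u * u0) (by rw [norm_mul, hu, hu0, one_mul]) ε hε
  rwa [smul_smul, ← mul_assoc]

theorem om_rot' (k : ℕ) (B : H →L[ℂ] H) (u0 w : ℂ) (hu0 : ‖u0‖ = 1) (hw : w ∈ Om k (u0 • B)) : u0⁻¹ * w ∈ Om k B := by
  have h0 : u0 ≠ 0 := by rintro rfl; simp at hu0
  have := om_rot k (u0 • B) u0⁻¹ w (by simp [hu0]) hw
  rwa [smul_smul, inv_mul_cancel₀ h0, one_smul] at this

theorem core (k : ℕ) (hk : 1 ≤ k) (hH : ¬ FiniteDimensional ℂ H) (B : H →L[ℂ] H)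
    (h0 : (0:ℂ) ∈ Om k B) (hsym : ∀ w ∈ Om k B, ∃ δ : ℝ, 0 < δ ∧ -(δ : ℂ) * w ∈ Om k B) :
    ∃ W : Submodule ℂ H, Module.finrank ℂ W = k ∧ Iso B W := by
  let Z : Set ℂ := {u | ‖u‖ = 1 ∧ ¬ ∃ F : Submodule ℂ H, Module.finrank ℂ F = k ∧ PD (u • B) F}
  have hZc : IsCompact Z := by
    refine (isCompact_sphere (0:ℂ) 1).of_isClosed_subset ?_ (fun u hu => by simpa using hu.1)
    have hZ : Z = {u | ‖u‖ = 1} ∩ {u | ∃ F : Submodule ℂ H, Module.finrank ℂ F = k ∧ PD (u • B) F}ᶜ := rfl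
    rw [hZ]
    refine (isClosed_eq continuous_norm continuous_const).inter ?_
    rw [isClosed_compl_iff, isOpen_iff_mem_nhds]
    rintro v ⟨F, hF, hP⟩
    have hFD : FiniteDimensional ℂ F := Module.finite_of_finrank_pos (by omega)
    obtain ⟨c, hc, hb⟩ := pd_bound hP
    refine Filter.mem_of_superset (Metric.ball_mem_nhds v (ε := c / 2 / (‖B‖ + 1)) (by positivity)) ?_
    intro w hw
    refine ⟨F, hF, pd_of_bound (half_pos hc) fun x hx => ?_⟩
    have h1 := hb x hx
    have h2 := re_inner_le ((w - v) • B) x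
    have h3 : ‖(w - v) • B‖ ≤ c / 2 := by
      rw [norm_smul]
      rw [Metric.mem_ball, dist_eq_norm, lt_div_iff₀ (by positivity)] at hw
      nlinarith [norm_nonneg (w - v), norm_nonneg B]
    have h4 : (⟪x, (w • B) x⟫_ℂ).re = (⟪x, (v • B) x⟫_ℂ).re + (⟪x, ((w - v) • B) x⟫_ℂ).re := by
      rw [← Complex.add_re, ← inner_add_right]
      congr 2
      simp [sub_smul]
    rw [h4]
    have h5 := (abs_le.1 h2).1
    have h6 : ‖(w - v) • B‖ * ‖x‖^2 ≤ c / 2 * ‖x‖^2 := by gcongr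
    linarith
  have hZno : ∀ u ∈ Z, ∀ F : Submodule ℂ H, FiniteDimensional ℂ F → PD (u • B) F → Module.finrank ℂ F ≤ k := by
    intro u hu F hF hP
    exact no_pd_le (S := ⊤) (by simpa using hu.2) F le_top hF hP
  by_cases hZe : Z = ∅
  · have hall : ∀ u : ℂ, ‖u‖ = 1 → ∃ F : Submodule ℂ H, Module.finrank ℂ F = k ∧ PD (u • B) F := by
      intro u hu
      by_contra hc
      have : u ∈ Z := ⟨hu, hc⟩
      rw [hZe] at this; exact this
    obtain ⟨γ, hγ, M, hM, h⟩ := compact_pd k hk B (Metric.sphere (0:ℂ) 1) (isCompact_sphere _ _)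
      (fun v hv => hall v (by simpa using hv))
    have hyp : Hyp k B M := by
      intro v hv
      have hv0 : v ≠ 0 := by rintro rfl; simp at hv
      have hn : 0 < ‖v‖ := norm_pos_iff.2 hv0
      obtain ⟨F, hF, hFk, hb⟩ := h (((‖v‖⁻¹ : ℝ) : ℂ) * v) (by
        rw [mem_sphere_zero_iff_norm, norm_mul, Complex.norm_real, norm_inv, norm_norm, inv_mul_cancel₀ hn.ne'])
      refine ⟨F, hF, hFk, ?_⟩
      have := pd_smul_pos hn _ (pd_of_bound hγ hb)
      rwa [← mul_assoc, ← Complex.ofReal_mul, mul_inv_cancel₀ hn.ne', Complex.ofReal_one, one_mul] at this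
    obtain ⟨W, -, hW⟩ := fd_thm B _ k _ rfl hyp
    exact ⟨W, hW⟩
  obtain ⟨uz, huz⟩ := Set.nonempty_iff_ne_empty.2 hZe
  have hconv : (0:ℂ) ∈ convexHull ℝ Z := by
    by_contra hcon
    obtain ⟨f, s, hfs, hs0⟩ := geometric_hahn_banach_closed_point (convex_convexHull ℝ Z) (isClosed_hull Z hZc) hcon
    rw [map_zero] at hs0
    let w : ℂ := (f 1 : ℂ) - I * (f I : ℂ)
    have hfw : ∀ u : ℂ, f u = (u * w).re := by
      intro u
      have h1 : u = u.re • (1:ℂ) + u.im • I := by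
        apply Complex.ext <;> simp
      conv_lhs => rw [h1, map_add, map_smul, map_smul]
      simp [w]
    have hneg : ∀ u ∈ Z, (u * w).re < 0 := by
      intro u hu
      rw [← hfw]
      exact (hfs u (subset_convexHull ℝ Z hu)).trans hs0
    obtain ⟨γ, hγ, M, hM, h⟩ := compact_pd k hk B (Metric.sphere (0:ℂ) 1 ∩ {u | 0 ≤ (u * w).re})
      ((isCompact_sphere _ _).inter_right (isClosed_le continuous_const (by fun_prop)))
      (by
        rintro v ⟨hv, hv'⟩
        by_contra hc
        have := hneg v ⟨by simpa using hv, hc⟩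
        exact absurd hv' (not_le.2 this))
    set δ : ℝ := γ / (‖w‖ + 1) with hδ
    have hδ0 : 0 < δ := by positivity
    have hw : (δ : ℂ) * w ∈ Om k B := by
      intro u hu ε hε
      have hre : (u * ((δ : ℂ) * w)).re = δ * (u * w).re := by
        rw [← mul_assoc, mul_comm u, mul_assoc, Complex.re_ofReal_mul]
      rw [hre]
      by_cases hs : 0 ≤ (u * w).re
      · obtain ⟨F, -, hFk, hb⟩ := h u ⟨by simpa using hu, hs⟩
        refine Good.mono ⟨F, hFk, hb⟩ ?_
        have h1 : (u * w).re ≤ ‖w‖ := by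
          refine (Complex.re_le_norm _).trans ?_
          rw [norm_mul, hu, one_mul]
        have h2 : δ * (u * w).re ≤ δ * (‖w‖ + 1) := by gcongr; linarith
        rw [hδ, div_mul_cancel₀ _ (by positivity)] at h2
        linarith
      · push Not at hs
        refine (h0 u hu ε hε).mono ?_
        have := mul_neg_of_pos_of_neg hδ0 hs
        rw [mul_zero, Complex.zero_re]; linarith
    obtain ⟨δ', hδ', hw'⟩ := hsym _ hw
    have h1 := hneg uz huz
    have hre : (uz * (-(δ' : ℂ) * ((δ : ℂ) * w))).re = δ' * δ * (-(uz * w).re) := by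
      have : uz * (-(δ' : ℂ) * ((δ : ℂ) * w)) = ((δ' * δ : ℝ) : ℂ) * (-(uz * w)) := by push_cast; ring
      rw [this, Complex.re_ofReal_mul, Complex.neg_re]
    have hpos : 0 < δ' * δ * (-(uz * w).re) := by
      have : 0 < -(uz * w).re := by linarith
      positivity
    obtain ⟨V, hV, hb⟩ := hw' uz huz.1 (δ' * δ * (-(uz * w).re) / 2) (by positivity)
    exact huz.2 ⟨V, hV, pd_of_bound (by rw [hre]; linarith) hb⟩
  rw [mem_convexHull_iff_exists_fintype] at hconv
  obtain ⟨ι, _, c, z, hc0, hc1, hz, hsum⟩ := hconv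
  classical
  obtain ⟨E, S, hE, hES, hS⟩ := finite_codim B k (Finset.univ.image z) (by
    intro u hu
    obtain ⟨i, -, rfl⟩ := Finset.mem_image.1 hu
    exact hZno _ (hz i))
  obtain ⟨i0, hi0⟩ : ∃ i, 0 < c i := by
    by_contra hcon
    push Not at hcon
    have : ∑ i, c i ≤ 0 := Finset.sum_nonpos fun i _ => hcon i
    linarith
  have hzero : ∀ x ∈ S, (⟪x, (z i0 • B) x⟫_ℂ).re = 0 := by
    intro x hx
    have h1 : ∑ i, c i * (⟪x, (z i • B) x⟫_ℂ).re = 0 := by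
      have h2 : (((∑ i, c i • z i) : ℂ) * ⟪x, B x⟫_ℂ).re = 0 := by rw [hsum]; simp
      rw [Finset.sum_mul, Complex.re_sum] at h2
      rw [← h2]
      refine Finset.sum_congr rfl fun i _ => ?_
      rw [smul_apply, inner_smul_right, Complex.real_smul, mul_assoc, Complex.re_ofReal_mul]
    have h2 : ∀ i ∈ Finset.univ, c i * (⟪x, (z i • B) x⟫_ℂ).re ≤ 0 := fun i _ =>
      mul_nonpos_of_nonneg_of_nonpos (hc0 i) (hS (z i) (Finset.mem_image_of_mem _ (Finset.mem_univ _)) x hx)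
    have h3 := (Finset.sum_eq_zero_iff_of_nonpos h2).1 h1 i0 (Finset.mem_univ _)
    rcases mul_eq_zero.1 h3 with h | h
    · exact absurd h hi0.ne'
    · exact h
  have hu0 := (hz i0).1
  obtain ⟨W, hWk, hW⟩ := core3 k hk hH (z i0 • B) (Module.finrank ℂ E)
    (by simpa using om_rot k B (z i0) 0 hu0 h0)
    (by
      intro w hw
      obtain ⟨δ, hδ, h⟩ := hsym _ (om_rot' k B (z i0) w hu0 hw)
      refine ⟨δ, hδ, ?_⟩
      have h2 := om_rot k B (z i0) _ hu0 h
      have hne : z i0 ≠ 0 := by intro h; simp [h] at hu0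
      convert h2 using 1
      field_simp)
    (fun F hF hP => hZno _ (hz i0) F hF hP)
    (by
      intro F hF hP
      refine finrank_le_codim E S F hES ?_
      rw [Submodule.eq_bot_iff]
      rintro x ⟨hx, hxS⟩
      by_contra hne
      have h1 := hP x hx hne
      rw [neg_apply, inner_neg_right, Complex.neg_re, hzero x hxS] at h1
      simp at h1)
  refine ⟨W, hWk, fun x hx y hy => ?_⟩
  have := hW x hx y hy
  rw [smul_apply, inner_smul_right] at this
  have hne : z i0 ≠ 0 := by intro h; simp [h] at hu0
  simpa [hne] using this

theorem good_shift {k : ℕ} {A : H →L[ℂ] H} {μ u : ℂ} {c : ℝ} :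
    Good k (u • (A - μ • ContinuousLinearMap.id ℂ H)) c ↔ Good k (u • A) (c + (u * μ).re) := by
  have key : ∀ x : H, (⟪x, (u • (A - μ • ContinuousLinearMap.id ℂ H)) x⟫_ℂ).re =
      (⟪x, (u • A) x⟫_ℂ).re - (u * μ).re * ‖x‖^2 := by
    intro x
    have h1 : ⟪x, (u • (A - μ • ContinuousLinearMap.id ℂ H)) x⟫_ℂ = ⟪x, (u • A) x⟫_ℂ - ((‖x‖^2 : ℝ) : ℂ) * (u * μ) := by
      simp only [smul_apply, sub_apply, ContinuousLinearMap.id_apply, inner_smul_right, inner_sub_right]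
      rw [inner_self_eq_norm_sq_to_K]
      push_cast
      simp only [Complex.coe_algebraMap]
      ring
    rw [h1, Complex.sub_re, Complex.re_ofReal_mul]; ring
  constructor
  · rintro ⟨V, hV, h⟩
    refine ⟨V, hV, fun x hx => ?_⟩
    have := h x hx
    rw [key] at this
    nlinarith
  · rintro ⟨V, hV, h⟩
    refine ⟨V, hV, fun x hx => ?_⟩
    have := h x hx
    rw [key]
    nlinarith

theorem om_shift (k : ℕ) (A : H →L[ℂ] H) (μ w : ℂ) :
    w ∈ Om k (A - μ • ContinuousLinearMap.id ℂ H) ↔ μ + w ∈ Om k A := by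
  simp only [Om, Set.mem_ofPred_eq]
  refine forall_congr' fun u => forall_congr' fun hu => forall_congr' fun ε => forall_congr' fun hε => ?_
  rw [good_shift]
  have : (u * w).re - ε + (u * μ).re = (u * (μ + w)).re - ε := by
    rw [mul_add, Complex.add_re]; ring
  rw [this]

theorem re_reOp (T : H →L[ℂ] H) (x : H) : (⟪x, reOp T x⟫_ℂ).re = (⟪x, T x⟫_ℂ).re := by
  have : ⟪x, reOp T x⟫_ℂ = (2:ℂ)⁻¹ * ⟪x, D T x⟫_ℂ := by
    simp [reOp, D, inner_smul_right, inner_add_right]; ring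
  rw [this, D_self]
  rw [← Complex.ofReal_ofNat, ← Complex.ofReal_inv, Complex.re_ofReal_mul, Complex.ofReal_re]
  ring

theorem lam_iff (hH : ¬ FiniteDimensional ℂ H) (k : ℕ) (hk : 1 ≤ k) (T : H →L[ℂ] H) (c : ℝ) :
    c ≤ lambdaSA k (reOp T) ↔ ∀ ε > 0, Good k T (c - ε) := by
  unfold lambdaSA
  simp_rw [re_reOp]
  set S := { t : ℝ | ∃ V : Submodule ℂ H, Module.finrank ℂ V = k ∧
    ∀ x ∈ V, ‖x‖ = 1 → t ≤ (⟪x, T x⟫_ℂ).re } with hS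
  have hgood : ∀ t, t ∈ S ↔ Good k T t := by
    intro t
    constructor
    · rintro ⟨V, hV, h⟩
      refine ⟨V, hV, fun x hx => ?_⟩
      by_cases hx0 : x = 0
      · simp [hx0]
      have hn : ‖x‖ ≠ 0 := norm_ne_zero_iff.2 hx0
      have h3 := h (((‖x‖⁻¹ : ℝ) : ℂ) • x) (V.smul_mem _ hx) (by
        rw [norm_smul, Complex.norm_real, norm_inv, norm_norm, inv_mul_cancel₀ hn])
      simp only [map_smul, inner_smul_left, inner_smul_right, Complex.conj_ofReal] at h3
      rw [Complex.re_ofReal_mul, Complex.re_ofReal_mul] at h3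
      calc _ ≤ (‖x‖⁻¹ * (‖x‖⁻¹ * (⟪x, T x⟫_ℂ).re)) * ‖x‖^2 := mul_le_mul_of_nonneg_right h3 (by positivity)
        _ = _ := by field_simp
    · rintro ⟨V, hV, h⟩
      refine ⟨V, hV, fun x hx hx1 => ?_⟩
      have := h x hx
      simpa [hx1] using this
  have hbdd : BddAbove S := by
    refine ⟨‖T‖, ?_⟩
    rintro t ⟨V, hV, h⟩
    have : Nontrivial V := Module.nontrivial_of_finrank_pos (R := ℂ) (by omega)
    obtain ⟨x, hx⟩ := exists_norm_eq (E := V) zero_le_one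
    have h1 := h x x.2 (by simpa using hx)
    have h2 := (abs_le.1 (re_inner_le T (x : H))).2
    have h3 : ‖(x : H)‖ = 1 := by simpa using hx
    rw [h3] at h2
    linarith
  have hne : S.Nonempty := by
    obtain ⟨W, -, hW⟩ := exists_finrank_of_inf (⊤ : Submodule ℂ H) (by
      intro h
      exact hH (Module.Finite.equiv (Submodule.topEquiv (R := ℂ) (M := H)))) k
    refine ⟨-‖T‖, (hgood _).2 ⟨W, hW, fun x _ => ?_⟩⟩
    have := (abs_le.1 (re_inner_le T x)).1
    linarith
  constructor
  · intro hc ε hε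
    obtain ⟨t, ht, hlt⟩ := exists_lt_of_lt_csSup hne (show c - ε < sSup S by linarith)
    exact ((hgood t).1 ht).mono hlt.le
  · intro h
    apply le_of_forall_pos_sub_le
    intro ε hε
    exact le_csSup hbdd ((hgood _).2 (h ε hε))

theorem omega_eq (hH : ¬ FiniteDimensional ℂ H) (k : ℕ) (hk : 1 ≤ k) (A : H →L[ℂ] H) :
    omegaK k A = Om k A := by
  ext w
  simp only [omegaK, Om, Set.mem_ofPred_eq, lam_iff hH k hk]
  constructor
  · intro h u hu
    obtain ⟨ξ, hξ, rfl⟩ : ∃ ξ ∈ Set.Ico (0:ℝ) (2 * Real.pi), Complex.exp (ξ * I) = u := by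
      have h1 := Complex.norm_mul_exp_arg_mul_I u
      rw [hu] at h1
      have h2 : Complex.exp (u.arg * I) = u := by simpa using h1
      have h3 := Complex.neg_pi_lt_arg u
      have h4 := Complex.arg_le_pi u
      have hpi := Real.pi_pos
      by_cases hs : 0 ≤ u.arg
      · exact ⟨u.arg, ⟨hs, by linarith⟩, h2⟩
      · refine ⟨u.arg + 2 * Real.pi, ⟨by linarith, by linarith⟩, ?_⟩
        push_cast
        rw [add_mul, Complex.exp_add, Complex.exp_two_pi_mul_I, mul_one, h2]
    exact h ξ hξ
  · intro h ξ hξ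
    exact h _ (Complex.norm_exp_ofReal_mul_I ξ)

theorem omega_convex (k : ℕ) (A : H →L[ℂ] H) : Convex ℝ (omegaK k A) := by
  intro x hx y hy a b ha hb hab ξ hξ
  have h1 := hx ξ hξ
  have h2 := hy ξ hξ
  have : (Complex.exp (ξ * I) * (a • x + b • y)).re = a * (Complex.exp (ξ * I) * x).re + b * (Complex.exp (ξ * I) * y).re := by
    rw [← Complex.re_ofReal_mul, ← Complex.re_ofReal_mul, ← Complex.add_re, Complex.real_smul, Complex.real_smul]
    congr 1; ring
  rw [this]
  have h3 := mul_le_mul_of_nonneg_left h1 ha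
  have h4 := mul_le_mul_of_nonneg_left h2 hb
  calc _ ≤ _ := add_le_add h3 h4
    _ = _ := by rw [← add_mul, hab, one_mul]

theorem omega_closed (k : ℕ) (A : H →L[ℂ] H) : IsClosed (omegaK k A) := by
  have : omegaK k A = ⋂ ξ ∈ Set.Ico (0 : ℝ) (2 * Real.pi), {μ : ℂ | (Complex.exp (ξ * Complex.I) * μ).re ≤ lambdaSA k (reOp (Complex.exp (ξ * Complex.I) • A))} := by
    ext; simp [omegaK]
  rw [this]
  refine isClosed_biInter fun ξ _ => isClosed_le (by fun_prop) continuous_const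

theorem rank_iff (k : ℕ) (hk : 1 ≤ k) (A : H →L[ℂ] H) (μ : ℂ) :
    μ ∈ rankKRange k A ↔ ∃ W : Submodule ℂ H, Module.finrank ℂ W = k ∧ Iso (A - μ • ContinuousLinearMap.id ℂ H) W := by
  constructor
  · rintro ⟨P, ⟨hP1, hP2⟩, hr, hP⟩
    refine ⟨LinearMap.range (P : H →ₗ[ℂ] H), ?_, ?_⟩
    · unfold opRank at hr
      unfold Module.finrank
      rw [hr]; simp
    · rintro _ ⟨a, rfl⟩ _ ⟨b, rfl⟩
      have hadj : ContinuousLinearMap.adjoint P = P := hP1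
      have h1 := congrArg (fun T : H →L[ℂ] H => T b) hP
      have h2 := congrArg (fun T : H →L[ℂ] H => T b) hP2
      simp only [ContinuousLinearMap.comp_apply, smul_apply] at h1 h2
      change ⟪P a, (A - μ • ContinuousLinearMap.id ℂ H) (P b)⟫_ℂ = 0
      rw [← hadj, ContinuousLinearMap.adjoint_inner_left, hadj]
      simp [h1, h2]
  · rintro ⟨W, hWk, hW⟩
    have hFD : FiniteDimensional ℂ W := Module.finite_of_finrank_pos (by omega)
    refine ⟨W.starProjection, ⟨?_, ?_⟩, ?_, ?_⟩
    · exact isSelfAdjoint_starProjection W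
    · exact W.isIdempotentElem_starProjection
    · unfold opRank
      have : LinearMap.range (W.starProjection : H →ₗ[ℂ] H) = W := W.range_starProjection
      rw [this, ← Module.finrank_eq_rank, hWk]
    · ext y
      apply ext_inner_left ℂ
      intro x
      have h1 := hW (W.starProjection x) (W.starProjection_apply_mem x) (W.starProjection y) (W.starProjection_apply_mem y)
      simp only [sub_apply, smul_apply, ContinuousLinearMap.id_apply, inner_sub_right, inner_smul_right] at h1
      simp only [ContinuousLinearMap.comp_apply, smul_apply, inner_smul_right]
      rw [← Submodule.inner_starProjection_left_eq_right]
      rw [Submodule.inner_starProjection_left_eq_right W x (W.starProjection y)] at h1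
      have h2 : W.starProjection (W.starProjection y) = W.starProjection y :=
        congrArg (fun T : H →L[ℂ] H => T y) W.isIdempotentElem_starProjection
      rw [h2] at h1
      exact sub_eq_zero.1 h1

theorem lam_sub (hH : ¬ FiniteDimensional ℂ H) (A : H →L[ℂ] H) (k : ℕ) (hk : 1 ≤ k) :
    rankKRange k A ⊆ omegaK k A := by
  intro μ hμ
  obtain ⟨W, hW, hI⟩ := (rank_iff k hk A μ).1 hμ
  rw [omega_eq hH k hk A]
  have h := (om_shift k A μ 0).1 (by
    intro u hu ε hε
    refine ⟨W, hW, fun x hx => ?_⟩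
    have h1 := hI x hx x hx
    rw [smul_apply, inner_smul_right, h1]
    simp only [mul_zero, Complex.zero_re, zero_sub]
    nlinarith [sq_nonneg ‖x‖])
  simpa using h

theorem critC (hH : ¬ FiniteDimensional ℂ H) (A : H →L[ℂ] H) (k : ℕ) (hk : 1 ≤ k) (μ : ℂ)
    (hμ : μ ∈ omegaK k A)
    (hs : ∀ w, μ + w ∈ omegaK k A → ∃ δ : ℝ, 0 < δ ∧ μ - (δ : ℂ) * w ∈ omegaK k A) :
    μ ∈ rankKRange k A := by
  rw [rank_iff k hk A μ]
  rw [omega_eq hH k hk A] at hμ hs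
  apply core k hk hH
  · rw [om_shift]; simpa using hμ
  · intro w hw
    rw [om_shift] at hw
    obtain ⟨δ, hδ, h⟩ := hs w hw
    refine ⟨δ, hδ, ?_⟩
    rw [om_shift]
    convert h using 1
    ring

theorem intr_sym (S : Set ℂ) (μ : ℂ) (hμ : μ ∈ intrinsicInterior ℝ S) (w : ℂ) (hw : μ + w ∈ S) :
    ∃ δ : ℝ, 0 < δ ∧ μ - (δ : ℂ) * w ∈ S := by
  have hμS : μ ∈ S := intrinsicInterior_subset hμ
  obtain ⟨y, hy, hyμ⟩ := hμ
  have hm : ∀ t : ℝ, AffineMap.lineMap μ (μ + w) (-t) ∈ affineSpan ℝ S := fun t =>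
    AffineMap.lineMap_mem _ (subset_affineSpan ℝ S hμS) (subset_affineSpan ℝ S hw)
  let g : ℝ → affineSpan ℝ S := fun t => ⟨AffineMap.lineMap μ (μ + w) (-t), hm t⟩
  have hg : Continuous g := by
    apply Continuous.subtype_mk
    simp only [AffineMap.lineMap_apply]
    simp
    fun_prop
  have hg0 : g 0 = y := by
    apply Subtype.ext
    simp [g, hyμ]
  have h1 : ∀ᶠ t in nhds (0:ℝ), g t ∈ interior ((↑) ⁻¹' S : Set (affineSpan ℝ S)) := by
    apply hg.continuousAt.eventually_mem
    rw [hg0]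
    exact isOpen_interior.mem_nhds hy
  obtain ⟨δ, hδ, h2⟩ := (Metric.eventually_nhds_iff.1 h1)
  refine ⟨δ/2, by positivity, ?_⟩
  have h3 := interior_subset (h2 (y := δ/2) (by rw [Real.dist_eq, sub_zero, abs_of_pos] <;> linarith))
  have h4 : AffineMap.lineMap μ (μ + w) (-(δ/2)) ∈ S := h3
  rw [AffineMap.lineMap_apply] at h4
  convert h4 using 1
  simp
  ring

theorem exists_orth (hH : ¬ FiniteDimensional ℂ H) (A : H →L[ℂ] H) :
    ∃ f : ℕ → H, (∀ n, ‖f n‖ = 1) ∧ ∀ m n, m < n → (⟪f m, f n⟫_ℂ = 0 ∧ ⟪f m, A (f n)⟫_ℂ = 0 ∧ ⟪f n, A (f m)⟫_ℂ = 0) := by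
  classical
  apply exists_seq_of_forall_finset_exists (fun x : H => ‖x‖ = 1)
    (fun x y => ⟪x, y⟫_ℂ = 0 ∧ ⟪x, A y⟫_ℂ = 0 ∧ ⟪y, A x⟫_ℂ = 0)
  intro s _
  let s' : Finset H := s ∪ s.image A ∪ s.image (ContinuousLinearMap.adjoint A)
  let F : Submodule ℂ H := Submodule.span ℂ (s' : Set H)
  have : FiniteDimensional ℂ F := FiniteDimensional.span_finset ℂ s'
  have hne : Fᗮ ≠ ⊥ := by
    intro h
    rw [Submodule.orthogonal_eq_bot_iff] at h
    apply hH
    have : FiniteDimensional ℂ (⊤ : Submodule ℂ H) := h ▸ (inferInstance : FiniteDimensional ℂ F)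
    exact Module.finite_def.2 (Module.Finite.iff_fg.1 this)
  obtain ⟨v, hv, hv0⟩ := Submodule.exists_mem_ne_zero_of_ne_bot hne
  have hn : ‖v‖ ≠ 0 := norm_ne_zero_iff.2 hv0
  set y := ((‖v‖⁻¹ : ℝ) : ℂ) • v with hy
  have hyF : y ∈ Fᗮ := Fᗮ.smul_mem _ hv
  have hz : ∀ z ∈ s', ⟪z, y⟫_ℂ = 0 := fun z hz =>
    (Submodule.mem_orthogonal F y).1 hyF z (Submodule.subset_span hz)
  refine ⟨y, by rw [hy, norm_smul, Complex.norm_real, norm_inv, norm_norm, inv_mul_cancel₀ hn], fun x hx => ⟨?_, ?_, ?_⟩⟩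
  · exact hz x (by simp [s', hx])
  · rw [← ContinuousLinearMap.adjoint_inner_left]
    exact hz _ (by simp only [s', Finset.mem_union, Finset.mem_image]; exact Or.inr ⟨x, hx, rfl⟩)
  · rw [← inner_conj_symm]
    rw [hz (A x) (by simp only [s', Finset.mem_union, Finset.mem_image]; exact Or.inl (Or.inr ⟨x, hx, rfl⟩))]
    simp

theorem om_nonempty (hH : ¬ FiniteDimensional ℂ H) (A : H →L[ℂ] H) (k : ℕ) :
    (Om k A).Nonempty := by
  obtain ⟨f, hf1, hf⟩ := exists_orth hH A
  have ho : ∀ m n, m ≠ n → ⟪f m, f n⟫_ℂ = 0 ∧ ⟪f m, A (f n)⟫_ℂ = 0 := by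
    intro m n hmn
    rcases lt_or_gt_of_ne hmn with h | h
    · exact ⟨(hf m n h).1, (hf m n h).2.1⟩
    · refine ⟨?_, (hf n m h).2.2⟩
      rw [← inner_conj_symm, (hf n m h).1]; simp
  have hb : ∀ n, ⟪f n, A (f n)⟫_ℂ ∈ Metric.closedBall (0:ℂ) ‖A‖ := by
    intro n
    rw [mem_closedBall_zero_iff]
    calc _ ≤ ‖f n‖ * ‖A (f n)‖ := norm_inner_le_norm _ _
      _ ≤ 1 * (‖A‖ * 1) := by
        rw [hf1]; gcongr
        simpa [hf1] using A.le_opNorm (f n)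
      _ = ‖A‖ := by ring
  obtain ⟨μ, -, φ, hφ, hlim⟩ := (isCompact_closedBall (0:ℂ) ‖A‖).tendsto_subseq hb
  refine ⟨μ, fun u hu ε hε => ?_⟩
  obtain ⟨n0, hn0⟩ := Metric.tendsto_atTop.1 hlim ε hε
  let g : Fin k → H := fun i => f (φ (n0 + i))
  have hinj : ∀ i j : Fin k, i ≠ j → φ (n0 + i) ≠ φ (n0 + j) := by
    intro i j hij h
    have := hφ.injective h
    exact hij (Fin.ext (by omega))
  have hg : Orthonormal ℂ g := ⟨fun i => hf1 _, fun i j hij => (ho _ _ (hinj i j hij)).1⟩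
  refine ⟨Submodule.span ℂ (Set.range g), ?_, ?_⟩
  · rw [finrank_span_eq_card hg.linearIndependent]; simp
  intro x hx
  obtain ⟨c, rfl⟩ := (Submodule.mem_span_range_iff_exists_fun ℂ).1 hx
  have hnorm : ‖∑ i, c i • g i‖^2 = ∑ i, ‖c i‖^2 := by
    have h1 := hg.inner_sum c c Finset.univ
    have h2 : ((‖∑ i, c i • g i‖^2 : ℝ) : ℂ) = ((∑ i, ‖c i‖^2 : ℝ) : ℂ) := by
      have h0 := inner_self_eq_norm_sq_to_K (𝕜 := ℂ) (∑ i, c i • g i)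
      rw [h1] at h0
      push_cast
      refine h0.symm.trans ?_
      refine Finset.sum_congr rfl fun i _ => ?_
      rw [Complex.conj_mul']
    exact_mod_cast h2
  have hA : ⟪∑ i, c i • g i, (u • A) (∑ i, c i • g i)⟫_ℂ = ∑ i, ((‖c i‖^2 : ℝ) : ℂ) * (u * ⟪g i, A (g i)⟫_ℂ) := by
    rw [smul_apply, inner_smul_right, map_sum, sum_inner, Finset.mul_sum]
    refine Finset.sum_congr rfl fun i _ => ?_
    rw [inner_sum, Finset.sum_eq_single i]
    · rw [map_smul, inner_smul_left, inner_smul_right]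
      push_cast
      rw [← Complex.conj_mul']
      ring
    · intro j _ hj
      rw [map_smul, inner_smul_left, inner_smul_right, (ho _ _ (hinj i j hj.symm)).2]
      simp
    · simp
  rw [hnorm, hA, Complex.re_sum, Finset.mul_sum]
  refine Finset.sum_le_sum fun i _ => ?_
  rw [Complex.re_ofReal_mul, mul_comm]
  apply mul_le_mul_of_nonneg_left _ (by positivity)
  have h1 := hn0 (n0 + i) (by omega)
  rw [dist_eq_norm] at h1
  have h2 : (u * μ - u * ⟪g i, A (g i)⟫_ℂ).re ≤ ε := by
    refine (Complex.re_le_norm _).trans ?_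
    rw [← mul_sub, norm_mul, hu, one_mul, norm_sub_rev]
    exact h1.le
  rw [Complex.sub_re] at h2
  linarith

theorem seg_sym (S : Set ℂ) (hS : Convex ℝ S) (μ0 μ : ℂ) (hμ : μ ∈ S)
    (hs : ∀ w, μ0 + w ∈ S → ∃ δ : ℝ, 0 < δ ∧ μ0 - (δ : ℂ) * w ∈ S) (t : ℝ) (ht0 : 0 ≤ t) (ht1 : t < 1)
    (w : ℂ) (hw : (μ0 + (t:ℂ) * (μ - μ0)) + w ∈ S) :
    ∃ δ : ℝ, 0 < δ ∧ (μ0 + (t:ℂ) * (μ - μ0)) - (δ : ℂ) * w ∈ S := by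
  obtain ⟨δ, hδ, h⟩ := hs ((t:ℂ) * (μ - μ0) + w) (by rwa [← add_assoc])
  have hp : 0 < 1 + δ * t := by positivity
  have ha : 0 < (1 - t) / (1 + δ * t) := div_pos (by linarith) hp
  refine ⟨(1 - t) / (1 + δ * t) * δ, by positivity, ?_⟩
  have h3 := hS h hμ ha.le (b := t * (1 + δ) / (1 + δ * t)) (by positivity) (by
    field_simp; ring)
  convert h3 using 1
  have hp' : (1 + (δ:ℂ) * t) ≠ 0 := by exact_mod_cast hp.ne'
  simp only [Complex.real_smul]
  push_cast
  have hq : (1 + (δ:ℂ) * t)⁻¹ * (1 + (δ:ℂ) * t) = 1 := inv_mul_cancel₀ hp'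
  simp only [div_eq_mul_inv]
  linear_combination (-(μ0 * (1 - t) + t * μ)) * hq

theorem final (hH : ¬ FiniteDimensional ℂ H) (A : H →L[ℂ] H) (k : ℕ) (hk : 1 ≤ k) :
    intrinsicInterior ℝ (omegaK k A) ⊆ rankKRange k A ∧
    rankKRange k A ⊆ omegaK k A ∧
    omegaK k A = closure (rankKRange k A) ∧
    (rankKRange k A).Nonempty := by
  have h1 : intrinsicInterior ℝ (omegaK k A) ⊆ rankKRange k A := fun μ hμ =>
    critC hH A k hk μ (intrinsicInterior_subset hμ) (intr_sym _ μ hμ)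
  have h2 := lam_sub hH A k hk
  have hne : (omegaK k A).Nonempty := by
    rw [omega_eq hH k hk A]; exact om_nonempty hH A k
  obtain ⟨μ0, hμ0⟩ := hne.intrinsicInterior (omega_convex k A)
  refine ⟨h1, h2, Set.Subset.antisymm ?_ (closure_minimal h2 (omega_closed k A)), ⟨μ0, h1 hμ0⟩⟩
  intro μ hμ
  let γ : ℝ → ℂ := fun t => μ0 + (t:ℂ) * (μ - μ0)
  have hγ : Filter.Tendsto γ (nhdsWithin 1 (Set.Iio 1)) (nhds μ) := by
    have hc : Continuous γ := by fun_prop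
    have : γ 1 = μ := by simp [γ]
    have h := hc.tendsto 1
    rw [this] at h
    exact h.mono_left nhdsWithin_le_nhds
  refine mem_closure_of_tendsto hγ ?_
  have hev : ∀ᶠ t in nhdsWithin (1:ℝ) (Set.Iio 1), t ∈ Set.Ioo (0:ℝ) 1 :=
    Ioo_mem_nhdsLT one_pos
  filter_upwards [hev] with t ht
  apply critC hH A k hk
  · have h3 := omega_convex k A (intrinsicInterior_subset hμ0) hμ (a := 1 - t) (b := t) (by linarith [ht.2]) ht.1.le (by ring)
    convert h3 using 1
    simp only [Complex.real_smul, γ]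
    push_cast
    ring
  · exact seg_sym _ (omega_convex k A) μ0 μ hμ (intr_sym _ μ0 hμ0) t ht.1.le ht.2


/-- For an operator `A` on an infinite-dimensional complex Hilbert space and `k ≥ 1`:
the relative (intrinsic) interior of `Ω_k(A)` is contained in `Λ_k(A)`,
`Λ_k(A) ⊆ Ω_k(A)`, `Ω_k(A)` is the closure of `Λ_k(A)`; in particular `Λ_k(A)` is
nonempty and `Ω_k(A)` is its closure. -/
theorem interior_closure_rankKRange
    (hH : ¬ FiniteDimensional ℂ H) (A : H →L[ℂ] H) (k : ℕ) (hk : 1 ≤ k) :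
    intrinsicInterior ℝ (omegaK k A) ⊆ rankKRange k A ∧
    rankKRange k A ⊆ omegaK k A ∧
    omegaK k A = closure (rankKRange k A) ∧
    (rankKRange k A).Nonempty := by
  exact final hH A k hk
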